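/- Let R be a commutative ring, n ≥ 4, and a ∈ R non-nilpotent. Then the restriction of μ_* : St(n, R⋉XR_a[X]) → St(n, R_a[X]) to the relative subgroup is a group isomorphism St(n, R⋉XR_a[X], XR_a[X]) ≅ St(n, R_a[X], XR_a[X]). -/

import Mathlib

/-- Generators of the Steinberg group: triples (i,j,r) with i ≠ j. -/
abbrev StGen (n : ℕ) (R : Type) : Type := {p : Fin n × Fin n // p.1 ≠ p.2} × R

open scoped commutatorElement

/-- The Steinberg relations. -/
inductive StRels (n : ℕ) (R : Type) [CommRing R] : FreeGroup (StGen n R) → Prop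
  | add (i j : Fin n) (hij : i ≠ j) (r s : R) :
      StRels n R (FreeGroup.of (⟨(i, j), hij⟩, r) * FreeGroup.of (⟨(i, j), hij⟩, s) *
        (FreeGroup.of (⟨(i, j), hij⟩, r + s))⁻¹)
  | commZero (i j h k : Fin n) (hij : i ≠ j) (hhk : h ≠ k) (hjh : j ≠ h) (hik : i ≠ k) (r s : R) :
      StRels n R ⁅(FreeGroup.of (⟨(i, j), hij⟩, r) : FreeGroup (StGen n R)), FreeGroup.of (⟨(h, k), hhk⟩, s)⁆
  | commAdd (i j k : Fin n) (hij : i ≠ j) (hjk : j ≠ k) (hik : i ≠ k) (r s : R) :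
      StRels n R (⁅(FreeGroup.of (⟨(i, j), hij⟩, r) : FreeGroup (StGen n R)), FreeGroup.of (⟨(j, k), hjk⟩, s)⁆ *
        (FreeGroup.of (⟨(i, k), hik⟩, r * s))⁻¹)

/-- The Steinberg group `St(n, R)`. -/
abbrev SteinbergGroup (n : ℕ) (R : Type) [CommRing R] : Type :=
  PresentedGroup {w | StRels n R w}

/-- The generator `x_{ij}(r)` of the Steinberg group. -/
def stx (n : ℕ) (R : Type) [CommRing R] (i j : Fin n) (hij : i ≠ j) (r : R) :
    SteinbergGroup n R :=
  PresentedGroup.of (⟨(i, j), hij⟩, r)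

/-- The fiber product ring `R ⋉ XR_a[X] = {(r, h) : h(0) = λ_a r}`. -/
def fiberRing (R : Type) [CommRing R] (a : R) :
    Subring (R × Polynomial (Localization.Away a)) where
  carrier := {p | Polynomial.eval 0 p.2 = algebraMap R (Localization.Away a) p.1}
  zero_mem' := by simp
  one_mem' := by simp
  add_mem' := by
    intro x y hx hy
    simp only [Set.mem_setOf_eq, Prod.snd_add, Polynomial.eval_add, Prod.fst_add, map_add] at *
    rw [hx, hy]
  neg_mem' := by
    intro x hx
    simp only [Set.mem_setOf_eq, Prod.snd_neg, Polynomial.eval_neg, Prod.fst_neg, map_neg] at *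
    rw [hx]
  mul_mem' := by
    intro x y hx hy
    simp only [Set.mem_setOf_eq, Prod.snd_mul, Polynomial.eval_mul, Prod.fst_mul, map_mul] at *
    rw [hx, hy]



namespace SteinPf

section basic
variable {n : ℕ} {A : Type} [CommRing A]

def lift {G : Type*} [Group G] (x : ∀ i j : Fin n, i ≠ j → A → G)
    (h1 : ∀ i j (h : i ≠ j) r s, x i j h r * x i j h s = x i j h (r + s))
    (h2 : ∀ i j h k (hij : i ≠ j) (hhk : h ≠ k), j ≠ h → i ≠ k → ∀ r s,
      Commute (x i j hij r) (x h k hhk s))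
    (h3 : ∀ i j k (hij : i ≠ j) (hjk : j ≠ k) (hik : i ≠ k) r s,
      ⁅x i j hij r, x j k hjk s⁆ = x i k hik (r * s)) : SteinbergGroup n A →* G :=
  PresentedGroup.toGroup (f := fun g => x g.1.1.1 g.1.1.2 g.1.2 g.2) (by
    intro w hw
    rcases hw with ⟨i, j, hij, r, s⟩ | ⟨i, j, h, k, hij, hhk, hjh, hik, r, s⟩ | ⟨i, j, k, hij, hjk, hik, r, s⟩
    · simp only [map_mul, FreeGroup.lift_apply_of, map_inv, h1, mul_inv_cancel]
    · simp only [map_commutatorElement, FreeGroup.lift_apply_of]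
      exact commutatorElement_eq_one_iff_commute.2 (h2 _ _ _ _ _ _ hjh hik _ _)
    · simp only [map_mul, map_commutatorElement, FreeGroup.lift_apply_of, map_inv]
      rw [h3 i j k hij hjk hik, mul_inv_cancel])

theorem lift_stx {G : Type*} [Group G] (x : ∀ i j : Fin n, i ≠ j → A → G) (h1 h2 h3)
    (i j : Fin n) (h : i ≠ j) (r : A) : lift x h1 h2 h3 (stx n A i j h r) = x i j h r :=
  PresentedGroup.toGroup.of _

theorem stx_add (i j : Fin n) (h : i ≠ j) (r s : A) :
    stx n A i j h r * stx n A i j h s = stx n A i j h (r + s) := by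
  have : (PresentedGroup.mk {w | StRels n A w}) (FreeGroup.of (⟨(i, j), h⟩, r) * FreeGroup.of (⟨(i, j), h⟩, s) *
        (FreeGroup.of (⟨(i, j), h⟩, r + s))⁻¹) = 1 :=
    PresentedGroup.one_of_mem (StRels.add i j h r s)
  rw [map_mul, map_inv, mul_inv_eq_one, map_mul] at this
  exact this

theorem stx_comm (i j h k : Fin n) (hij : i ≠ j) (hhk : h ≠ k) (hjh : j ≠ h) (hik : i ≠ k) (r s : A) :
    Commute (stx n A i j hij r) (stx n A h k hhk s) := by
  have : (PresentedGroup.mk {w | StRels n A w}) ⁅(FreeGroup.of (⟨(i, j), hij⟩, r) : FreeGroup (StGen n A)), FreeGroup.of (⟨(h, k), hhk⟩, s)⁆ = 1 :=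
    PresentedGroup.one_of_mem (StRels.commZero i j h k hij hhk hjh hik r s)
  rw [map_commutatorElement] at this
  exact commutatorElement_eq_one_iff_commute.1 this

theorem stx_rel (i j k : Fin n) (hij : i ≠ j) (hjk : j ≠ k) (hik : i ≠ k) (r s : A) :
    ⁅stx n A i j hij r, stx n A j k hjk s⁆ = stx n A i k hik (r * s) := by
  have : (PresentedGroup.mk {w | StRels n A w}) (⁅(FreeGroup.of (⟨(i, j), hij⟩, r) : FreeGroup (StGen n A)), FreeGroup.of (⟨(j, k), hjk⟩, s)⁆ *
        (FreeGroup.of (⟨(i, k), hik⟩, r * s))⁻¹) = 1 :=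
    PresentedGroup.one_of_mem (StRels.commAdd i j k hij hjk hik r s)
  rw [map_mul, map_inv, mul_inv_eq_one, map_commutatorElement] at this
  exact this

/-- induction over the Steinberg group -/
theorem st_induction {P : SteinbergGroup n A → Prop} (h1 : P 1)
    (hx : ∀ i j h r, P (stx n A i j h r)) (hm : ∀ x y, P x → P y → P (x * y)) (z) : P z := by
  have hx' : ∀ i j h r, P (stx n A i j h r)⁻¹ := by
    intro i j h r
    have : (stx n A i j h r)⁻¹ = stx n A i j h (-r) := by
      rw [inv_eq_iff_mul_eq_one, stx_add, add_neg_cancel]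
      have := stx_add i j h (0 : A) 0
      rw [add_zero] at this
      exact mul_eq_left.1 this
    rw [this]; exact hx _ _ _ _
  have hz : z ∈ Subgroup.closure (Set.range (PresentedGroup.of (rels := {w | StRels n A w}))) := by
    rw [PresentedGroup.closure_range_of]; trivial
  induction hz using Subgroup.closure_induction'' with
  | mem x hx0 => obtain ⟨⟨⟨⟨i, j⟩, h⟩, r⟩, rfl⟩ := hx0; exact hx i j h r
  | inv_mem x hx0 => obtain ⟨⟨⟨⟨i, j⟩, h⟩, r⟩, rfl⟩ := hx0; exact hx' i j h r
  | one => exact h1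
  | mul x y _ _ hx hy => exact hm _ _ hx hy

theorem st_hom_ext {G : Type*} [Group G] {f g : SteinbergGroup n A →* G}
    (h : ∀ i j hij r, f (stx n A i j hij r) = g (stx n A i j hij r)) : f = g := by
  refine MonoidHom.ext fun z => ?_
  refine st_induction (P := fun z => f z = g z) ?_ ?_ ?_ z
  · simp
  · intro i j hij r; exact h i j hij r
  · intro x y hx hy; rw [map_mul, map_mul, hx, hy]

/-- total version -/
def xx (i j : Fin n) (r : A) : SteinbergGroup n A := if h : i ≠ j then stx n A i j h r else 1

theorem xx_eq {i j : Fin n} (h : i ≠ j) (r : A) : xx i j r = stx n A i j h r := by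
  simp [xx, h]
@[simp] theorem xx_self (i : Fin n) (r : A) : xx i i r = 1 := by simp [xx]

theorem xx_add (i j : Fin n) (r s : A) : xx i j (r + s) = xx i j r * xx i j s := by
  unfold xx; split_ifs with h
  · exact (stx_add i j h r s).symm
  · simp

@[simp] theorem xx_zero (i j : Fin n) : xx i j (0 : A) = 1 := by
  have := xx_add i j (0 : A) 0
  rw [add_zero] at this
  exact left_eq_mul.1 this

theorem xx_neg (i j : Fin n) (r : A) : xx i j (-r) = (xx i j r)⁻¹ := by
  rw [eq_inv_iff_mul_eq_one, ← xx_add, neg_add_cancel, xx_zero]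

theorem xx_comm {i j h k : Fin n} (hjh : j ≠ h) (hik : i ≠ k) (r s : A) :
    Commute (xx i j r) (xx h k s) := by
  unfold xx; split_ifs
  · exact stx_comm _ _ _ _ _ _ hjh hik _ _
  all_goals simp

theorem xx_rel {i j k : Fin n} (hij : i ≠ j) (hjk : j ≠ k) (hik : i ≠ k) (r s : A) :
    ⁅xx i j r, xx j k s⁆ = xx i k (r * s) := by
  rw [xx_eq hij, xx_eq hjk, xx_eq hik, stx_rel]

theorem ind {P : (Fin n → A) → Prop} (h0 : P 0) (hadd : ∀ u v, P u → P v → P (u + v))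
    (S : Fin n → Prop) (hs : ∀ m, S m → ∀ r, P (Pi.single m r)) (v : Fin n → A)
    (hv : ∀ m, ¬ S m → v m = 0) : P v := by
  have : v = ∑ m, Pi.single m (v m) := (Finset.univ_sum_single v).symm
  rw [this]
  refine Finset.sum_induction _ P hadd h0 ?_
  intro m _
  by_cases h : S m
  · exact hs m h _
  · rw [hv m h, Pi.single_zero]; exact h0

/-- hom from additive to multiplicative via coordinates -/
def xHom (i j : Fin n) : Multiplicative A →* SteinbergGroup n A where
  toFun r := xx i j r.toAdd
  map_one' := xx_zero i j
  map_mul' r s := xx_add i j _ _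

theorem col_comm (k : Fin n) : Pairwise fun i j => ∀ (x y : Multiplicative A),
    Commute (xHom i k x) (xHom j k y) := by
  intro i j _ x y
  by_cases hi : i = k
  · subst hi; simp [xHom]
  by_cases hj : j = k
  · subst hj; simp [xHom]
  exact xx_comm (Ne.symm hj) hi _ _

theorem row_comm (k : Fin n) : Pairwise fun i j => ∀ (x y : Multiplicative A),
    Commute (xHom k i x) (xHom k j y) := by
  intro i j _ x y
  by_cases hi : i = k
  · subst hi; simp [xHom]
  by_cases hj : j = k
  · subst hj; simp [xHom]
  exact xx_comm hi (Ne.symm hj) _ _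

def col (k : Fin n) (u : Fin n → A) : SteinbergGroup n A :=
  MonoidHom.noncommPiCoprod _ (col_comm (A := A) k) (fun i => Multiplicative.ofAdd (u i))
def row (k : Fin n) (u : Fin n → A) : SteinbergGroup n A :=
  MonoidHom.noncommPiCoprod _ (row_comm (A := A) k) (fun i => Multiplicative.ofAdd (u i))

theorem col_add (k : Fin n) (u v : Fin n → A) : col k (u + v) = col k u * col k v := by
  unfold col; rw [← map_mul]; rfl
theorem row_add (k : Fin n) (u v : Fin n → A) : row k (u + v) = row k u * row k v := by
  unfold row; rw [← map_mul]; rfl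

@[simp] theorem col_zero (k : Fin n) : col k (0 : Fin n → A) = 1 := by
  have := col_add k (0 : Fin n → A) 0
  rw [add_zero] at this
  exact left_eq_mul.1 this
@[simp] theorem row_zero (k : Fin n) : row k (0 : Fin n → A) = 1 := by
  have := row_add k (0 : Fin n → A) 0
  rw [add_zero] at this
  exact left_eq_mul.1 this

theorem ofAdd_single (m : Fin n) (r : A) : (fun i => Multiplicative.ofAdd ((Pi.single m r : Fin n → A) i))
    = Pi.mulSingle m (Multiplicative.ofAdd r) := by
  ext i
  by_cases h : i = m
  · subst h; simp
  · simp [h]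

theorem col_single (k m : Fin n) (r : A) : col k (Pi.single m r) = xx m k r := by
  unfold col; rw [ofAdd_single, MonoidHom.noncommPiCoprod_mulSingle]; rfl
theorem row_single (k m : Fin n) (r : A) : row k (Pi.single m r) = xx k m r := by
  unfold row; rw [ofAdd_single, MonoidHom.noncommPiCoprod_mulSingle]; rfl

theorem col_neg (k : Fin n) (u : Fin n → A) : col k (-u) = (col k u)⁻¹ := by
  rw [eq_inv_iff_mul_eq_one, ← col_add, neg_add_cancel, col_zero]
theorem row_neg (k : Fin n) (u : Fin n → A) : row k (-u) = (row k u)⁻¹ := by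
  rw [eq_inv_iff_mul_eq_one, ← row_add, neg_add_cancel, row_zero]
theorem col_col_self (k : Fin n) (u v : Fin n → A) : Commute (col k u) (col k v) := by
  unfold Commute SemiconjBy; rw [← col_add, ← col_add, add_comm]
theorem row_row_self (k : Fin n) (u v : Fin n → A) : Commute (row k u) (row k v) := by
  unfold Commute SemiconjBy; rw [← row_add, ← row_add, add_comm]

attribute [irreducible] xx col row

/-- conjugation -/
abbrev cj {G : Type*} [Group G] (g x : G) : G := MulAut.conj g x

theorem cj_of_comm {G : Type*} [Group G] {g x : G} (h : Commute g x) : cj g x = x := by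
  simp [cj, MulAut.conj_apply, h.eq]
theorem comm_of_cj {G : Type*} [Group G] {g x : G} (h : cj g x = x) : Commute g x := by
  simp only [cj, MulAut.conj_apply, mul_inv_eq_iff_eq_mul] at h; exact h
theorem cj_mul {G : Type*} [Group G] (g h x : G) : cj (g * h) x = cj g (cj h x) := by
  simp [cj]

/-- elementary acting on rows/columns -/
theorem cj_xx_row {p q k : Fin n} (hpq : p ≠ q) (hpk : p ≠ k) (hqk : q ≠ k) (r : A) (z : Fin n → A) :
    cj (xx p q r) (row k z) = row k (z - Pi.single q (z p * r)) := by
  refine ind (A := A) (P := fun z => cj (xx p q r) (row k z) = row k (z - Pi.single q (z p * r))) ?_ ?_ (fun _ => True) ?_ z ?_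
  · simp
  · intro u v hu hv
    rw [row_add, cj, map_mul, ← cj, ← cj, hu, hv, ← row_add]
    congr 1
    rw [Pi.add_apply, add_mul, Pi.single_add]; abel
  · intro m _ t
    by_cases hm : m = p
    · subst hm
      rw [row_single, sub_eq_add_neg, add_comm, row_add, row_neg, row_single, row_single, Pi.single_eq_same,
        ← xx_rel hpk.symm hpq hqk.symm, cj, MulAut.conj_apply, commutatorElement_def]
      group
    · have : Commute (xx p q r) (xx k m t) := xx_comm hqk (Ne.symm hm) _ _
      rw [row_single, cj_of_comm this, Pi.single_eq_of_ne (Ne.symm hm)]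
      simp [row_single]
  · simp

theorem cj_xx_col {p q k : Fin n} (hpq : p ≠ q) (hpk : p ≠ k) (hqk : q ≠ k) (r : A) (z : Fin n → A) :
    cj (xx p q r) (col k z) = col k (z + Pi.single p (r * z q)) := by
  refine ind (A := A) (P := fun z => cj (xx p q r) (col k z) = col k (z + Pi.single p (r * z q))) ?_ ?_ (fun _ => True) ?_ z ?_
  · simp
  · intro u v hu hv
    rw [col_add, cj, map_mul, ← cj, ← cj, hu, hv, ← col_add]
    congr 1
    rw [Pi.add_apply, mul_add, Pi.single_add]; abel
  · intro m _ t
    by_cases hm : m = q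
    · subst hm
      rw [add_comm, col_add, col_single, col_single, Pi.single_eq_same,
        ← xx_rel hpq hqk hpk, cj, MulAut.conj_apply, commutatorElement_def]
      group
    · have : Commute (xx p q r) (xx m k t) := xx_comm (Ne.symm hm) hpk _ _
      rw [col_single, cj_of_comm this, Pi.single_eq_of_ne (Ne.symm hm)]
      simp [col_single]
  · simp

open Matrix

theorem cj_col_row {k l : Fin n} (hkl : k ≠ l) (w : Fin n → A) (hk : w k = 0) (hl : w l = 0) (z : Fin n → A) :
    cj (col l w) (row k z) = row k (z - Pi.single l (z ⬝ᵥ w)) := by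
  have : w l = 0 ∧ ∀ z, cj (col l w) (row k z) = row k (z - Pi.single l (z ⬝ᵥ w)) := by
    refine ind (A := A) (P := fun w => w l = 0 ∧ ∀ z, cj (col l w) (row k z) = row k (z - Pi.single l (z ⬝ᵥ w))) ?_ ?_ (fun m => m ≠ k ∧ m ≠ l) ?_ w ?_
    · simp
    · intro u v hu hv
      refine ⟨by simp [hu.1, hv.1], fun z => ?_⟩
      rw [col_add, cj_mul, hv.2, hu.2]
      congr 1
      rw [sub_dotProduct, single_dotProduct, hu.1, dotProduct_add, mul_zero, sub_zero, Pi.single_add]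
      abel
    · intro m hm r
      refine ⟨by simp [hm.2.symm], fun z => ?_⟩
      rw [col_single, cj_xx_row hm.2 hm.1 hkl.symm, dotProduct_single]
    · intro m hm
      by_cases h : m = k
      · rw [h, hk]
      · have : m = l := by tauto
        rw [this, hl]
  exact this.2 z

theorem cj_row_col {k l : Fin n} (hkl : k ≠ l) (w : Fin n → A) (hk : w k = 0) (hl : w l = 0) (z : Fin n → A) :
    cj (row l w) (col k z) = col k (z + Pi.single l (w ⬝ᵥ z)) := by
  have : w l = 0 ∧ ∀ z, cj (row l w) (col k z) = col k (z + Pi.single l (w ⬝ᵥ z)) := by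
    refine ind (A := A) (P := fun w => w l = 0 ∧ ∀ z, cj (row l w) (col k z) = col k (z + Pi.single l (w ⬝ᵥ z))) ?_ ?_ (fun m => m ≠ k ∧ m ≠ l) ?_ w ?_
    · simp
    · intro u v hu hv
      refine ⟨by simp [hu.1, hv.1], fun z => ?_⟩
      rw [row_add, cj_mul, hv.2, hu.2]
      congr 1
      rw [dotProduct_add, dotProduct_single, hu.1, add_dotProduct, zero_mul, add_zero, Pi.single_add]
      abel
    · intro m hm r
      refine ⟨by simp [hm.2.symm], fun z => ?_⟩
      rw [row_single, cj_xx_col hm.2.symm hkl.symm hm.1, single_dotProduct]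
    · intro m hm
      by_cases h : m = k
      · rw [h, hk]
      · have : m = l := by tauto
        rw [this, hl]
  exact this.2 z

theorem cj_row_row {k l : Fin n} (hkl : k ≠ l) (w : Fin n → A) (hk : w k = 0) (hl : w l = 0) (z : Fin n → A) :
    cj (row l w) (row k z) = row k (z - z l • w) := by
  have : w l = 0 ∧ ∀ z, cj (row l w) (row k z) = row k (z - z l • w) := by
    refine ind (A := A) (P := fun w => w l = 0 ∧ ∀ z, cj (row l w) (row k z) = row k (z - z l • w)) ?_ ?_ (fun m => m ≠ k ∧ m ≠ l) ?_ w ?_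
    · simp
    · intro u v hu hv
      refine ⟨by simp [hu.1, hv.1], fun z => ?_⟩
      rw [row_add, cj_mul, hv.2, hu.2]
      congr 1
      simp [hv.1]; abel
    · intro m hm r
      refine ⟨by simp [hm.2.symm], fun z => ?_⟩
      rw [row_single, cj_xx_row hm.2.symm hkl.symm hm.1, ← Pi.single_smul', smul_eq_mul]
    · intro m hm
      by_cases h : m = k
      · rw [h, hk]
      · have : m = l := by tauto
        rw [this, hl]
  exact this.2 z

theorem cj_col_col {k l : Fin n} (hkl : k ≠ l) (w : Fin n → A) (hk : w k = 0) (hl : w l = 0) (z : Fin n → A) :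
    cj (col l w) (col k z) = col k (z + z l • w) := by
  have : w l = 0 ∧ ∀ z, cj (col l w) (col k z) = col k (z + z l • w) := by
    refine ind (A := A) (P := fun w => w l = 0 ∧ ∀ z, cj (col l w) (col k z) = col k (z + z l • w)) ?_ ?_ (fun m => m ≠ k ∧ m ≠ l) ?_ w ?_
    · simp
    · intro u v hu hv
      refine ⟨by simp [hu.1, hv.1], fun z => ?_⟩
      rw [col_add, cj_mul, hv.2, hu.2]
      congr 1
      simp [hv.1]; abel
    · intro m hm r
      refine ⟨by simp [hm.2.symm], fun z => ?_⟩
      rw [col_single, cj_xx_col hm.2 hm.1 hkl.symm, ← Pi.single_smul', smul_eq_mul, mul_comm]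
    · intro m hm
      by_cases h : m = k
      · rw [h, hk]
      · have : m = l := by tauto
        rw [this, hl]
  exact this.2 z

end basic
end SteinPf


namespace SteinPf

section two
open Matrix
variable {n : ℕ} {A : Type} [CommRing A]

theorem grp_lemma {G : Type*} [Group G] {x y z : G} (hxz : Commute x z)
    (hmw : Commute ⁅x, y⁆ ⁅y, z⁆) (hwz : Commute ⁅y, z⁆ z) : ⁅⁅x, y⁆, z⁆ = ⁅x, ⁅y, z⁆⁆ := by
  have h1 : y * z * y⁻¹ = ⁅y, z⁆ * z := by simp [commutatorElement_def]
  have h2 : x * y * x⁻¹ = ⁅x, y⁆ * y := by simp [commutatorElement_def]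
  have h3 : x * ⁅y, z⁆ * x⁻¹ = ⁅⁅x, y⁆ * y, z⁆ := by
    have : x * z * x⁻¹ = z := by rw [hxz.eq]; simp
    calc x * ⁅y, z⁆ * x⁻¹ = ⁅x * y * x⁻¹, x * z * x⁻¹⁆ := by
          simp [commutatorElement_def]; group
      _ = _ := by rw [this, h2]
  generalize ⁅x, y⁆ = m at *
  have h4 : ⁅m * y, z⁆ = ⁅y, z⁆ * ⁅m, z⁆ := by
    calc ⁅m * y, z⁆ = m * (y * z * y⁻¹) * m⁻¹ * z⁻¹ := by simp [commutatorElement_def]; group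
      _ = m * ⁅y, z⁆ * z * m⁻¹ * z⁻¹ := by rw [h1]; group
      _ = ⁅y, z⁆ * ⁅m, z⁆ := by rw [hmw.eq]; simp [commutatorElement_def]; group
  have h5 : Commute ⁅y, z⁆ ⁅m, z⁆ := by
    rw [commutatorElement_def m z]
    exact (((hmw.symm.mul_right hwz)).mul_right hmw.symm.inv_right).mul_right hwz.inv_right
  rw [commutatorElement_def x, h3, h4, h5.eq, mul_inv_cancel_right]

theorem comm_mul_left {G : Type*} [Group G] (a b c : G) : ⁅a * b, c⁆ = cj a ⁅b, c⁆ * ⁅a, c⁆ := by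
  simp [commutatorElement_def, mul_assoc]
theorem comm_mul_right {G : Type*} [Group G] (a b c : G) : ⁅a, b * c⁆ = ⁅a, b⁆ * cj b ⁅a, c⁆ := by
  simp [commutatorElement_def, mul_assoc]
theorem cj_comm {G : Type*} [Group G] (a b c : G) : cj a ⁅b, c⁆ = ⁅cj a b, cj a c⁆ := 
  map_commutatorElement _ _ _


theorem cxr {k l : Fin n} (hkl : k ≠ l) (t : A) {v : Fin n → A} (hk : v k = 0) (hl : v l = 0) :
    ⁅xx l k t, row k v⁆ = row l (t • v) := by
  have := cj_row_row hkl.symm v hl hk (-Pi.single k t)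
  rw [row_neg, row_single] at this
  rw [commutatorElement_def, mul_assoc, mul_assoc, ← mul_assoc (row k v), ← MulAut.conj_apply, ← cj, this,
    ← row_single, ← row_add]
  congr 1
  simp

theorem ccx {k l : Fin n} (hkl : k ≠ l) (t : A) {u : Fin n → A} (hk : u k = 0) (hl : u l = 0) :
    ⁅col l u, xx l k t⁆ = col k (t • u) := by
  have := cj_col_col hkl u hk hl (Pi.single l t)
  rw [col_single] at this
  rw [commutatorElement_def, ← MulAut.conj_apply, ← cj, this, ← col_single, ← col_neg, ← col_add]
  congr 1
  simp

def D (k : Fin n) (u v : Fin n → A) : SteinbergGroup n A := ⁅col k u, row k v⁆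
def F (k : Fin n) (u v : Fin n → A) : SteinbergGroup n A := D k u v * row k (u k • v)

theorem col_row_comm {k l : Fin n} (hkl : k ≠ l) {u v : Fin n → A} (hk : u k = 0) (hl : u l = 0)
    (h : u ⬝ᵥ v = 0) : Commute (col l u) (row k v) := by
  apply comm_of_cj
  rw [cj_col_row hkl u hk hl, dotProduct_comm, h]; simp

theorem row_row_comm {k l : Fin n} (hkl : k ≠ l) {u v : Fin n → A} (hk : u k = 0) (hl : u l = 0)
    (h : v l = 0) : Commute (row l u) (row k v) := by
  apply comm_of_cj
  rw [cj_row_row hkl u hk hl, h]; simp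
theorem col_col_comm {k l : Fin n} (hkl : k ≠ l) {u v : Fin n → A} (hk : u k = 0) (hl : u l = 0)
    (h : v l = 0) : Commute (col l u) (col k v) := by
  apply comm_of_cj
  rw [cj_col_col hkl u hk hl, h]; simp

theorem D_shift {k l : Fin n} (hkl : k ≠ l) (t : A) {u v : Fin n → A} (huk : u k = 0) (hul : u l = 0)
    (hvk : v k = 0) (hvl : v l = 0) (h : u ⬝ᵥ v = 0) : D k (t • u) v = D l u (t • v) := by
  unfold D
  rw [← ccx hkl t huk hul, ← cxr hkl t hvk hvl]
  apply grp_lemma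
  · exact col_row_comm hkl huk hul h
  · rw [ccx hkl t huk hul, cxr hkl t hvk hvl]
    exact col_row_comm hkl.symm (by simp [hul]) (by simp [huk]) (by simp [h])
  · rw [cxr hkl t hvk hvl]
    exact row_row_comm hkl (by simp [hvk]) (by simp [hvl]) hvl

theorem D_eq {k l : Fin n} (hkl : k ≠ l) {u v : Fin n → A} (huk : u k = 0) (hul : u l = 0)
    (hvk : v k = 0) (hvl : v l = 0) (h : u ⬝ᵥ v = 0) : D k u v = D l u v := by
  have := D_shift hkl 1 huk hul hvk hvl h
  rwa [one_smul, one_smul] at this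

theorem D_act_row {k l : Fin n} (hkl : k ≠ l) {w v : Fin n → A} (hwk : w k = 0) (hwl : w l = 0)
    (hvk : v k = 0) (hvl : v l = 0) (h : w ⬝ᵥ v = 0) (z : Fin n → A) :
    cj (D l w v) (row k z) = row k (z - (z ⬝ᵥ w) • v) := by
  have h' : v ⬝ᵥ w = 0 := by rw [dotProduct_comm, h]
  unfold D
  rw [commutatorElement_def, ← col_neg, ← row_neg, cj_mul, cj_mul, cj_mul,
    cj_row_row hkl _ (by simp [hvk]) (by simp [hvl]),
    cj_col_row hkl _ (by simp [hwk]) (by simp [hwl]),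
    cj_row_row hkl _ hvk hvl, cj_col_row hkl _ hwk hwl]
  congr 1
  simp [sub_dotProduct, add_dotProduct, hvl, hwl, h', add_smul, Pi.single_neg]; abel

theorem D_act_col {k l : Fin n} (hkl : k ≠ l) {w v : Fin n → A} (hwk : w k = 0) (hwl : w l = 0)
    (hvk : v k = 0) (hvl : v l = 0) (h : w ⬝ᵥ v = 0) (z : Fin n → A) :
    cj (D l w v) (col k z) = col k (z + (v ⬝ᵥ z) • w) := by
  have h' : v ⬝ᵥ w = 0 := by rw [dotProduct_comm, h]
  unfold D
  rw [commutatorElement_def, ← col_neg, ← row_neg, cj_mul, cj_mul, cj_mul,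
    cj_row_col hkl _ (by simp [hvk]) (by simp [hvl]),
    cj_col_col hkl _ (by simp [hwk]) (by simp [hwl]),
    cj_row_col hkl _ hvk hvl, cj_col_col hkl _ hwk hwl]
  congr 1
  simp [dotProduct_add, hvl, hwl, h', add_smul, Pi.single_neg]; abel


theorem col_congr (k : Fin n) {u u' : Fin n → A} (h : ∀ i, i ≠ k → u i = u' i) : col k u = col k u' := by
  have : u = u' + Pi.single k (u k - u' k) := by
    ext i
    by_cases hi : i = k
    · subst hi; simp
    · simp [hi, h i hi]
  rw [this, col_add, col_single, xx_self, mul_one]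

/-- kill two coordinates -/
def z2 (k l : Fin n) (u : Fin n → A) : Fin n → A := fun i => if i = k ∨ i = l then 0 else u i

@[simp] theorem z2_l (k l : Fin n) (u : Fin n → A) : z2 k l u k = 0 := by simp [z2]
@[simp] theorem z2_r (k l : Fin n) (u : Fin n → A) : z2 k l u l = 0 := by simp [z2]
theorem z2_smul (k l : Fin n) (t : A) (u : Fin n → A) : z2 k l (t • u) = t • z2 k l u := by
  ext i; simp [z2]
theorem z2_symm (k l : Fin n) (u : Fin n → A) : z2 k l u = z2 l k u := by
  ext i; simp [z2, or_comm]

theorem z2_dot {k l : Fin n} {u v : Fin n → A} (hk : v k = 0) (hl : v l = 0) : z2 k l u ⬝ᵥ v = u ⬝ᵥ v := by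
  apply Finset.sum_congr rfl
  intro i _
  unfold z2
  split_ifs with h
  · rcases h with rfl | rfl <;> simp [*]
  · rfl

theorem z2_eq {k l : Fin n} (hkl : k ≠ l) (u : Fin n → A) :
    u = Pi.single l (u l) + z2 k l u + Pi.single k (u k) := by
  ext i
  by_cases hi : i = k
  · subst hi; simp [hkl]
  by_cases hi' : i = l
  · subst hi'; simp [hi]
  simp [hi, hi', z2]

theorem dot_smul0 {v w : Fin n → A} (h : v ⬝ᵥ w = 0) (t : A) : (t • v) ⬝ᵥ w = 0 := by simp [h]

theorem F_decomp {k l : Fin n} (hkl : k ≠ l) {u v : Fin n → A} (hvk : v k = 0) (hvl : v l = 0)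
    (h : u ⬝ᵥ v = 0) : F k u v = D k (z2 k l u) v * row l (u l • v) * row k (u k • v) := by
  have h0 : z2 k l u ⬝ᵥ v = 0 := by rw [z2_dot hvk hvl, h]
  have hc : Commute (xx l k (u l)) (D k (z2 k l u) v) := by
    apply Commute.symm
    apply comm_of_cj
    rw [← row_single, D_act_row hkl.symm (by simp) (by simp) hvl hvk h0]
    congr 1
    simp
  unfold F
  congr 1
  rw [D, z2_eq hkl u, col_add, col_single, xx_self, mul_one, col_add, col_single, comm_mul_left,
    cxr hkl _ hvk hvl, ← D, ← z2_eq hkl u, cj_of_comm hc]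

theorem L1 {k l : Fin n} (hkl : k ≠ l) {u v : Fin n → A} (hvk : v k = 0) (hvl : v l = 0)
    (h : u ⬝ᵥ v = 0) : F k u v = F l u v := by
  have h0 : z2 k l u ⬝ᵥ v = 0 := by rw [z2_dot hvk hvl, h]
  rw [F_decomp hkl hvk hvl h, F_decomp hkl.symm hvl hvk h, z2_symm l k,
    D_eq hkl (by simp) (by simp) hvk hvl h0, mul_assoc, mul_assoc]
  congr 1
  exact (row_row_comm hkl (by simp [hvk]) (by simp [hvl]) (by simp [hvl])).eq

theorem F_smul {k l : Fin n} (hkl : k ≠ l) (t : A) {u v : Fin n → A} (hvk : v k = 0) (hvl : v l = 0)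
    (h : u ⬝ᵥ v = 0) : F k (t • u) v = F k u (t • v) := by
  have h0 : z2 k l u ⬝ᵥ v = 0 := by rw [z2_dot hvk hvl, h]
  rw [F_decomp hkl hvk hvl (by simp [h]), F_decomp hkl (by simp [hvk]) (by simp [hvl]) (by simp [h]),
    z2_smul, D_shift hkl _ (by simp) (by simp) hvk hvl h0,
    D_eq hkl (by simp) (by simp) (by simp [hvk]) (by simp [hvl]) (by simp [h0])]
  simp only [Pi.smul_apply, smul_eq_mul, smul_smul, mul_comm]

theorem L2 {p q k : Fin n} (hpq : p ≠ q) (hpk : p ≠ k) (hqk : q ≠ k) (r : A) (u v : Fin n → A) :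
    cj (xx p q r) (F k u v) = F k (u + Pi.single p (r * u q)) (v - Pi.single q (r * v p)) := by
  unfold F D
  rw [cj, map_mul, ← cj, ← cj, cj_comm, cj_xx_col hpq hpk hqk, cj_xx_row hpq hpk hqk, cj_xx_row hpq hpk hqk]
  congr 2
  · rw [mul_comm]
  · ext i
    by_cases hi : i = q
    · subst hi; simp [hpk.symm]; ring
    · simp [hi, hpk.symm]

theorem F_act_row {k l : Fin n} (hkl : k ≠ l) {w v : Fin n → A} (hwk : w k = 0)
    (hvk : v k = 0) (hvl : v l = 0) (h : w ⬝ᵥ v = 0) (z : Fin n → A) :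
    cj (F l w v) (row k z) = row k (z - (z ⬝ᵥ w) • v) := by
  have h0 : z2 k l w ⬝ᵥ v = 0 := by rw [z2_dot hvk hvl, h]
  have h1 : v ⬝ᵥ z2 k l w = 0 := by rw [dotProduct_comm, h0]
  have h2 : z ⬝ᵥ w = z ⬝ᵥ z2 k l w + z l * w l := by
    conv_lhs => rw [z2_eq hkl w, hwk]
    simp; ring
  rw [F, cj_mul, cj_row_row hkl _ (by simp [hvk]) (by simp [hvl]),
    D, col_congr l (u := w) (u' := z2 k l w), ← D, D_act_row hkl (by simp) (by simp) hvk hvl h0, h2]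
  · congr 1
    simp [sub_dotProduct, h1]
    module
  · intro i hi
    by_cases hik : i = k
    · subst hik; simp [hwk]
    · simp [z2, hi, hik]

/-- kill one -/
def z1 (k : Fin n) (u : Fin n → A) : Fin n → A := fun i => if i = k then 0 else u i
@[simp] theorem z1_l (k : Fin n) (u : Fin n → A) : z1 k u k = 0 := by simp [z1]
theorem z1_dot {k : Fin n} {u v : Fin n → A} (hk : v k = 0) : z1 k u ⬝ᵥ v = u ⬝ᵥ v := by
  apply Finset.sum_congr rfl
  intro i _
  unfold z1
  split_ifs with h
  · subst h; simp [*]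
  · rfl

theorem L3 {k l : Fin n} (hkl : k ≠ l) {u v v' : Fin n → A} (hvk : v k = 0) (hvk' : v' k = 0)
    (hvl' : v' l = 0) (h : u ⬝ᵥ v = 0) (h' : u ⬝ᵥ v' = 0) : F k u (v + v') = F k u v * F k u v' := by
  have h0' : z1 k u ⬝ᵥ v' = 0 := by rw [z1_dot hvk', h']
  have e : D k u v' = F l (z1 k u) v' := by
    rw [← L1 hkl hvk' hvl' h0', F, D, D, z1_l, zero_smul, row_zero, mul_one, col_congr]
    intro i hi; simp [z1, hi]
  have hc : ∀ t : A, Commute (row k (t • v)) (D k u v') := by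
    intro t
    apply Commute.symm
    apply comm_of_cj
    rw [e, F_act_row hkl (by simp) hvk' hvl' h0']
    congr 1
    rw [dotProduct_comm, dotProduct_smul, z1_dot hvk, h]; simp
  have h1 : D k u (v + v') = D k u v * D k u v' := by
    have := hc 1
    rw [one_smul] at this
    rw [D, row_add, comm_mul_right, ← D, ← D, cj_of_comm this]
  unfold F
  rw [h1, smul_add, row_add, mul_assoc, mul_assoc, ← mul_assoc (D k u v'), ← (hc (u k)).eq, mul_assoc]

theorem L4 {k l l' : Fin n} (hkl : k ≠ l) (hkl' : k ≠ l') {u v v' : Fin n → A} (hvk : v k = 0) (hvk' : v' k = 0)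
    (hvl' : v' l' = 0) (hvl : v l = 0) (h : u ⬝ᵥ v = 0) (h' : u ⬝ᵥ v' = 0) :
    Commute (F k u v) (F k u v') := by
  unfold Commute SemiconjBy
  rw [← L3 hkl' hvk hvk' hvl' h h', ← L3 hkl hvk' hvk hvl h' h, add_comm]

@[simp] theorem F_zero (k : Fin n) (u : Fin n → A) : F k u 0 = 1 := by simp [F, D]

end two
end SteinPf


namespace SteinPf

section three
open Matrix
variable {n : ℕ} {A : Type} [CommRing A]

theorem ex3 [hn : Fact (4 ≤ n)] (i j m : Fin n) : ∃ k : Fin n, k ≠ i ∧ k ≠ j ∧ k ≠ m := by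
  by_contra! h
  have : (Finset.univ : Finset (Fin n)) ⊆ {i, j, m} := by
    intro k _
    simp only [Finset.mem_insert, Finset.mem_singleton]
    have := h k; tauto
  have h1 := Finset.card_le_card this
  have h2 := Finset.card_le_three (a := i) (b := j) (c := m)
  have h3 := hn.out
  simp at h1
  omega

def vv (i j : Fin n) (u : Fin n → A) (c : A) : Fin n → A := Pi.single i (c * u j) - Pi.single j (c * u i)

theorem vv_dot (i j : Fin n) (u : Fin n → A) (c : A) : u ⬝ᵥ vv i j u c = 0 := by
  simp [vv, dotProduct_sub]; ring
theorem vv_zero {i j k : Fin n} (hi : k ≠ i) (hj : k ≠ j) (u : Fin n → A) (c : A) : vv i j u c k = 0 := by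
  simp [vv, hi, hj]
theorem vv_add (i j : Fin n) (u : Fin n → A) (c d : A) : vv i j u (c + d) = vv i j u c + vv i j u d := by
  simp [vv, add_mul, Pi.single_add]; abel
theorem vv_swap (i j : Fin n) (u : Fin n → A) (c : A) : vv i j u c = vv j i u (-c) := by
  simp [vv, Pi.single_neg]; abel
theorem vv_self (i : Fin n) (u : Fin n → A) (c : A) : vv i i u c = 0 := by
  simp [vv]
theorem vv_smul (i j : Fin n) (u : Fin n → A) (t c : A) : vv i j (t • u) c = t • vv i j u c := by
  simp [vv, smul_sub, ← Pi.single_smul, mul_left_comm]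
theorem vv_smul' (i j : Fin n) (u : Fin n → A) (t c : A) : t • vv i j u c = vv i j u (t * c) := by
  simp [vv, smul_sub, ← Pi.single_smul, mul_assoc]

theorem E_lem {k l : Fin n} (hkl : k ≠ l) {u v : Fin n → A} (huk : u k = 0) (hul : u l = 0)
    (hvk : v k = 0) (hvl : v l = 0) (h : u ⬝ᵥ v = 0) (f1 f2 g1 g2 : A) :
    ⁅col k (f1 • u) * col l (f2 • u), row k (g1 • v) * row l (g2 • v)⁆ = D k ((f1 * g1 + f2 * g2) • u) v := by
  have h' : v ⬝ᵥ u = 0 := by rw [dotProduct_comm, h]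
  have cc : ∀ {k l : Fin n}, k ≠ l → u k = 0 → u l = 0 → v k = 0 → v l = 0 → ∀ (a b t : A),
      Commute (col k (t • u)) (D l (a • u) (b • v)) := by
    intro k l hkl huk hul hvk hvl a b t
    apply Commute.symm; apply comm_of_cj
    rw [D_act_col hkl (by simp [huk]) (by simp [hul]) (by simp [hvk]) (by simp [hvl]) (by simp [h])]
    congr 1; simp [h']
  have cr : ∀ {k l : Fin n}, k ≠ l → u k = 0 → u l = 0 → v k = 0 → v l = 0 → ∀ (a b t : A),
      Commute (row k (t • v)) (D l (a • u) (b • v)) := by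
    intro k l hkl huk hul hvk hvl a b t
    apply Commute.symm; apply comm_of_cj
    rw [D_act_row hkl (by simp [huk]) (by simp [hul]) (by simp [hvk]) (by simp [hvl]) (by simp [h])]
    congr 1; simp [h']
  have sh : ∀ a b : A, D l (a • u) (b • v) = D k ((a * b) • u) v := by
    intro a b
    rw [← D_shift hkl b (by simp [huk]) (by simp [hul]) hvk hvl (by simp [h]), smul_smul, mul_comm]
  have sh' : ∀ a b : A, D k (a • u) (b • v) = D k ((a * b) • u) v := by
    intro a b
    rw [D_eq hkl (by simp [huk]) (by simp [hul]) (by simp [hvk]) (by simp [hvl]) (by simp [h]), sh]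
  have q1 : ⁅col l (f2 • u), row k (g1 • v)⁆ = 1 := commutatorElement_eq_one_iff_commute.2
    (col_row_comm hkl (by simp [huk]) (by simp [hul]) (by simp [h]))
  have q2 : ⁅col k (f1 • u), row l (g2 • v)⁆ = 1 := commutatorElement_eq_one_iff_commute.2
    (col_row_comm hkl.symm (by simp [hul]) (by simp [huk]) (by simp [h]))
  have hD : ∀ a b : A, D k ((a + b) • u) v = D k (b • u) v * D k (a • u) v := by
    intro a b
    have := cc hkl huk hul hvk hvl b 1 a
    rw [one_smul, ← D_eq hkl (by simp [huk]) (by simp [hul]) hvk hvl (by simp [h])] at this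
    rw [add_smul, D, col_add, comm_mul_left, ← D, ← D, cj_of_comm this]
  rw [comm_mul_left, comm_mul_right, comm_mul_right, q1, q2, one_mul, cj, cj, cj, map_one, mul_one, ← cj, ← cj,
    ← D, ← D, cj_of_comm (cr hkl huk hul hvk hvl _ _ _), cj_of_comm (cc hkl huk hul hvk hvl _ _ _), sh, sh', hD]


/-- swapping rows and columns -/
theorem RC {i j k l : Fin n} (hik : i ≠ k) (hil : i ≠ l) (hjk : j ≠ k) (hjl : j ≠ l)
    {w f : Fin n → A} (hw : w = Pi.single i (w i) + Pi.single j (w j))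
    (hf : f = Pi.single k (f k) + Pi.single l (f l)) :
    row i (w i • f) * row j (w j • f) = col k (f k • w) * col l (f l • w) := by
  have h : ∀ i (t : A), row i (t • f) = xx i k (t * f k) * xx i l (t * f l) := by
    intro i t
    conv_lhs => rw [hf]
    rw [smul_add, row_add, ← Pi.single_smul, ← Pi.single_smul, row_single, row_single]; rfl
  have h' : ∀ k (t : A), col k (t • w) = xx i k (t * w i) * xx j k (t * w j) := by
    intro k t
    conv_lhs => rw [hw]
    rw [smul_add, col_add, ← Pi.single_smul, ← Pi.single_smul, col_single, col_single]; rfl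
  rw [h, h, h', h', mul_assoc, mul_assoc, ← mul_assoc (xx i l _), ← mul_assoc (xx j k _),
    (xx_comm hjl.symm hik _ _ : Commute (xx i l (w i * f l)) (xx j k (w j * f k))).eq]
  simp only [mul_comm]

variable [hn : Fact (4 ≤ n)]

noncomputable def Yij (i j : Fin n) (u : Fin n → A) (c : A) : SteinbergGroup n A :=
  F (ex3 i j i).choose u (vv i j u c)

theorem Yij_eq {i j k : Fin n} (hi : k ≠ i) (hj : k ≠ j) (u : Fin n → A) (c : A) :
    Yij i j u c = F k u (vv i j u c) := by
  obtain ⟨h1, h2, _⟩ := (ex3 i j i).choose_spec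
  unfold Yij
  by_cases h : (ex3 i j i).choose = k
  · rw [h]
  · exact L1 h (vv_zero h1 h2 _ _) (vv_zero hi hj _ _) (vv_dot _ _ _ _)

theorem Yij_add (i j : Fin n) (u : Fin n → A) (c d : A) : Yij i j u (c + d) = Yij i j u c * Yij i j u d := by
  obtain ⟨k, h1, h2, _⟩ := ex3 i j i
  obtain ⟨l, h1', h2', h3⟩ := ex3 i j k
  rw [Yij_eq h1 h2, Yij_eq h1 h2, Yij_eq h1 h2, vv_add]
  exact L3 h3.symm (vv_zero h1 h2 _ _) (vv_zero h1 h2 _ _) (vv_zero h1' h2' _ _) (vv_dot _ _ _ _) (vv_dot _ _ _ _)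

@[simp] theorem Yij_zero (i j : Fin n) (u : Fin n → A) : Yij i j u 0 = 1 := by
  have := Yij_add i j u 0 0
  rw [add_zero] at this
  exact left_eq_mul.1 this
theorem Yij_neg (i j : Fin n) (u : Fin n → A) (c : A) : Yij i j u (-c) = (Yij i j u c)⁻¹ := by
  rw [eq_inv_iff_mul_eq_one, ← Yij_add, neg_add_cancel, Yij_zero]

theorem Yij_swap (i j : Fin n) (u : Fin n → A) (c : A) : Yij i j u c = Yij j i u (-c) := by
  obtain ⟨k, h1, h2, _⟩ := ex3 i j i
  rw [Yij_eq h1 h2, Yij_eq h2 h1, vv_swap]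
@[simp] theorem Yij_self (i : Fin n) (u : Fin n → A) (c : A) : Yij i i u c = 1 := by
  unfold Yij; rw [vv_self, F_zero]
theorem Yij_smul (i j : Fin n) (u : Fin n → A) (t c : A) : Yij i j (t • u) c = Yij i j u (t * (t * c)) := by
  obtain ⟨k, h1, h2, _⟩ := ex3 i j i
  obtain ⟨l, h1', h2', h3⟩ := ex3 i j k
  rw [Yij_eq h1 h2, Yij_eq h1 h2, vv_smul, vv_smul', F_smul h3.symm _ (vv_zero h1 h2 _ _) (vv_zero h1' h2' _ _)
    (vv_dot _ _ _ _), vv_smul']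


theorem L5a {i j k l : Fin n} (hij : i ≠ j) (hkl : k ≠ l) (hik : i ≠ k) (hil : i ≠ l) (hjk : j ≠ k) (hjl : j ≠ l)
    (hall : ∀ m, m = i ∨ m = j ∨ m = k ∨ m = l) (u : Fin n → A) (c c' : A) :
    Commute (Yij i j u c) (Yij k l u c') := by
  rw [Yij_eq hik.symm hjk.symm, Yij_eq hik hil]
  obtain ⟨v, hv⟩ : ∃ v, v = vv i j u c := ⟨_, rfl⟩
  obtain ⟨v', hv'⟩ : ∃ v', v' = vv k l u c' := ⟨_, rfl⟩
  have hvk : v k = 0 := by rw [hv]; exact vv_zero hik.symm hjk.symm _ _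
  have hvl : v l = 0 := by rw [hv]; exact vv_zero hil.symm hjl.symm _ _
  have hvi' : v' i = 0 := by rw [hv']; exact vv_zero hik hil _ _
  have hvj' : v' j = 0 := by rw [hv']; exact vv_zero hjk hjl _ _
  have huv : u ⬝ᵥ v = 0 := by rw [hv]; exact vv_dot _ _ _ _
  have huv' : u ⬝ᵥ v' = 0 := by rw [hv']; exact vv_dot _ _ _ _
  rw [← hv, ← hv']
  clear hv hv'
  have s1 : ∀ w : Fin n → A, w k = 0 → w l = 0 → w = Pi.single i (w i) + Pi.single j (w j) := by
    intro w h1 h2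
    ext m
    rcases hall m with rfl | rfl | rfl | rfl
    · simp [hij]
    · simp [hij.symm]
    · simp [hik.symm, hjk.symm, h1]
    · simp [hil.symm, hjl.symm, h2]
  have s2 : ∀ w : Fin n → A, w i = 0 → w j = 0 → w = Pi.single k (w k) + Pi.single l (w l) := by
    intro w h1 h2
    ext m
    rcases hall m with rfl | rfl | rfl | rfl
    · simp [hik, hil, h1]
    · simp [hjk, hjl, h2]
    · simp [hkl]
    · simp [hkl.symm]
  obtain ⟨u1, hu1⟩ : ∃ u1, u1 = z2 k l u := ⟨_, rfl⟩
  obtain ⟨u2, hu2⟩ : ∃ u2, u2 = z2 i j u := ⟨_, rfl⟩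
  have u1i : u1 i = u i := by simp [hu1, z2, hik, hil]
  have u1j : u1 j = u j := by simp [hu1, z2, hjk, hjl]
  have u2k : u2 k = u k := by simp [hu2, z2, hik.symm, hjk.symm]
  have u2l : u2 l = u l := by simp [hu2, z2, hil.symm, hjl.symm]
  have u1k : u1 k = 0 := by simp [hu1]
  have u1l : u1 l = 0 := by simp [hu1]
  have u2i : u2 i = 0 := by simp [hu2]
  have u2j : u2 j = 0 := by simp [hu2]
  have d1 : u1 ⬝ᵥ v = 0 := by rw [hu1, z2_dot hvk hvl, huv]
  have d2 : u2 ⬝ᵥ v' = 0 := by rw [hu2, z2_dot hvi' hvj', huv']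
  have d2' : v' k * u k + v' l * u l = 0 := by
    rw [s2 v' hvi' hvj', dotProduct_add, dotProduct_single, dotProduct_single, u2k, u2l] at d2
    linear_combination d2
  rw [F_decomp hkl hvk hvl huv, F_decomp hij hvi' hvj' huv', ← hu1, ← hu2, mul_assoc, mul_assoc,
    (row_row_comm hkl (by simp [hvk]) (by simp [hvl]) (by simp [hvl]) : Commute (row l (u l • v)) (row k (u k • v))).eq,
    (row_row_comm hij (by simp [hvi']) (by simp [hvj']) (by simp [hvj']) : Commute (row j (u j • v')) (row i (u i • v'))).eq]
  have rcQ' : row i (u i • v') * row j (u j • v') = col k (v' k • u1) * col l (v' l • u1) := by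
    rw [← u1i, ← u1j]
    exact RC hik hil hjk hjl (s1 _ u1k u1l) (s2 _ hvi' hvj')
  have rcQ : row k (u k • v) * row l (u l • v) = col i (v i • u2) * col j (v j • u2) := by
    rw [← u2k, ← u2l]
    exact RC hik.symm hjk.symm hil.symm hjl.symm (s2 _ u2i u2j) (s1 _ hvk hvl)
  have colc : ∀ {k l : Fin n} {u v : Fin n → A}, k ≠ l → u k = 0 → u l = 0 → v k = 0 → v l = 0 → u ⬝ᵥ v = 0 → ∀ t : A,
      Commute (D l u v) (col k (t • u)) := by
    intro k l u v hkl huk hul hvk hvl h t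
    apply comm_of_cj
    rw [D_act_col hkl huk hul hvk hvl h, dotProduct_comm]
    congr 1; simp [h]
  have c1 : Commute (D k u1 v) (row i (u i • v') * row j (u j • v')) := by
    rw [rcQ']
    apply Commute.mul_right
    · rw [D_eq hkl u1k u1l hvk hvl d1]
      exact colc hkl u1k u1l hvk hvl d1 _
    · exact colc hkl.symm u1l u1k hvl hvk d1 _
  have c2 : Commute (D i u2 v') (row k (u k • v) * row l (u l • v)) := by
    rw [rcQ]
    apply Commute.mul_right
    · rw [D_eq hij u2i u2j hvi' hvj' d2]
      exact colc hij u2i u2j hvi' hvj' d2 _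
    · exact colc hij.symm u2j u2i hvj' hvi' d2 _
  have c3 : Commute (row k (u k • v) * row l (u l • v)) (row i (u i • v') * row j (u j • v')) := by
    apply Commute.symm
    rw [rcQ']
    apply commutatorElement_eq_one_iff_commute.1
    rw [E_lem hkl u1k u1l hvk hvl d1, d2']
    simp [D]
  have c4 : Commute (D i u2 v') (D k u1 v) := by
    apply comm_of_cj
    have di : D i u2 v' = D j u2 v' := D_eq hij u2i u2j hvi' hvj' d2
    have e1 : cj (D i u2 v') (col k u1) = col k ((1 - u k * v' k) • u1) * col l ((- u k * v' l) • u1) := by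
      have r0 := RC hik hil hjk hjl (f := Pi.single k 1) (s1 u1 u1k u1l) (by simp [hkl.symm])
      rw [Pi.single_eq_same, Pi.single_eq_of_ne hkl.symm, zero_smul, col_zero, mul_one, one_smul] at r0
      have r1 := RC hik hil hjk hjl (f := Pi.single k 1 - u k • v') (s1 u1 u1k u1l)
        (s2 _ (by simp [hvi', hik]) (by simp [hvj', hjk]))
      simp only [Pi.sub_apply, Pi.single_eq_same, Pi.single_eq_of_ne hkl.symm, Pi.smul_apply, smul_eq_mul, zero_sub] at r1
      rw [neg_mul, ← r1, ← r0, cj, map_mul, ← cj, ← cj]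
      nth_rw 1 [di]
      rw [D_act_row hij u2i u2j hvi' hvj' d2, D_act_row hij.symm u2j u2i hvj' hvi' d2]
      simp [smul_sub, smul_smul, u2k]
    have e2 : cj (D i u2 v') (row k v) = row k ((1 + v' k * u k) • v) * row l ((v' k * u l) • v) := by
      have r0 := RC hik.symm hjk.symm hil.symm hjl.symm (w := Pi.single k 1) (by simp [hkl.symm]) (s1 v hvk hvl)
      rw [Pi.single_eq_same, Pi.single_eq_of_ne hkl.symm, zero_smul, row_zero, mul_one, one_smul] at r0
      have r1 := RC hik.symm hjk.symm hil.symm hjl.symm (w := Pi.single k 1 + v' k • u2)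
        (s2 _ (by simp [u2i, hik]) (by simp [u2j, hjk])) (s1 v hvk hvl)
      simp only [Pi.add_apply, Pi.single_eq_same, Pi.single_eq_of_ne hkl.symm, Pi.smul_apply, smul_eq_mul, zero_add, u2k, u2l] at r1
      rw [r1, r0, cj, map_mul, ← cj, ← cj]
      nth_rw 1 [di]
      rw [D_act_col hij u2i u2j hvi' hvj' d2, D_act_col hij.symm u2j u2i hvj' hvi' d2]
      simp [smul_add, smul_smul]
    have : D k u1 v = ⁅col k u1, row k v⁆ := rfl
    rw [this, cj_comm, e1, e2, E_lem hkl u1k u1l hvk hvl d1, ← this]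
    have : (1 - u k * v' k) * (1 + v' k * u k) + -u k * v' l * (v' k * u l) = 1 := by
      linear_combination (- u k * v' k) * d2'
    rw [this, one_smul]
  exact (c4.symm.mul_right c1).mul_left (c2.symm.mul_right c3)

theorem L5 (i j k l : Fin n) (u : Fin n → A) (c c' : A) :
    Commute (Yij i j u c) (Yij k l u c') := by
  by_cases hij : i = j
  · subst hij; simp
  by_cases hkl : k = l
  · subst hkl; simp
  by_cases hm : ∃ m, m ≠ i ∧ m ≠ j ∧ m ≠ k ∧ m ≠ l
  · obtain ⟨m, h1, h2, h3, h4⟩ := hm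
    obtain ⟨p, hp1, hp2, hp3⟩ := ex3 i j m
    obtain ⟨q, hq1, hq2, hq3⟩ := ex3 k l m
    rw [Yij_eq h1 h2, Yij_eq h3 h4]
    exact L4 hp3.symm hq3.symm (vv_zero h1 h2 _ _) (vv_zero h3 h4 _ _) (vv_zero hq1 hq2 _ _) (vv_zero hp1 hp2 _ _)
      (vv_dot _ _ _ _) (vv_dot _ _ _ _)
  · have h4 : ∀ a b c : Fin n, (∀ m, m = i ∨ m = j ∨ m = k ∨ m = l → m = a ∨ m = b ∨ m = c) → False := by
      intro a b c h
      obtain ⟨m, h1, h2, h3⟩ := ex3 a b c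
      apply hm
      refine ⟨m, ?_⟩
      have := h m; tauto
    push Not at hm
    apply L5a hij hkl
    · rintro rfl; exact h4 i j l (by tauto)
    · rintro rfl; exact h4 i j k (by tauto)
    · rintro rfl; exact h4 i j l (by tauto)
    · rintro rfl; exact h4 i j k (by tauto)
    · intro m; have := hm m; tauto
end three
end SteinPf


namespace SteinPf

section four
open Matrix
variable {n : ℕ} {A : Type} [CommRing A] [hn : Fact (4 ≤ n)]

theorem L6a {p q i j : Fin n} (hpq : p ≠ q) (hpi : p ≠ i) (hpj : p ≠ j) (r : A) (u : Fin n → A) (c : A) :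
    cj (xx p q r) (Yij i j u c) = Yij i j (u + Pi.single p (r * u q)) c := by
  have hvv : vv i j (u + Pi.single p (r * u q)) c = vv i j u c := by
    simp [vv, hpi.symm, hpj.symm]
  by_cases hq : q = i ∨ q = j
  · obtain ⟨k, h1, h2, h3⟩ := ex3 i j p
    have hqk : q ≠ k := by rintro rfl; tauto
    rw [Yij_eq h1 h2, Yij_eq h1 h2, L2 hpq h3.symm hqk, hvv, vv_zero hpi hpj]; simp
  · push Not at hq
    have hv1 := vv_zero hpi hpj u c
    have hv2 := vv_zero hq.1 hq.2 u c
    have hd := vv_dot i j u c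
    have hd' := vv_dot i j (u + Pi.single p (r * u q)) c
    rw [Yij_eq hpi hpj, Yij_eq hpi hpj, hvv]
    rw [hvv] at hd'
    generalize vv i j u c = v at *
    have h0 : z2 p q u ⬝ᵥ v = 0 := by rw [z2_dot hv1 hv2, hd]
    have hz : z2 p q (u + Pi.single p (r * u q)) = z2 p q u := by
      ext m; unfold z2; split_ifs with h
      · rfl
      · push Not at h; simp [h.1]
    have hc : Commute (xx p q r) (D p (z2 p q u) v) := by
      apply Commute.symm
      apply comm_of_cj
      rw [← row_single, D_eq hpq (by simp) (by simp) hv1 hv2 h0, D_act_row hpq (by simp) (by simp) hv1 hv2 h0]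
      congr 1
      simp
    have hc2 : cj (xx p q r) (row q (u q • v)) = row p (r • u q • v) * row q (u q • v) := by
      rw [← cxr hpq.symm r (by simp [hv2]) (by simp [hv1])]
      simp [commutatorElement_def]
    have hc3 : cj (xx p q r) (row p (u p • v)) = row p (u p • v) := by
      apply cj_of_comm
      rw [← row_single]; exact row_row_self _ _ _
    rw [F_decomp hpq hv1 hv2 hd, F_decomp hpq hv1 hv2 hd', hz, cj, map_mul, map_mul, ← cj, ← cj, ← cj, hc2, hc3,
      cj_of_comm hc]
    have hc4 : Commute (row p (r • u q • v)) (row q (u q • v)) :=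
      row_row_comm hpq.symm (by simp [hv2]) (by simp [hv1]) (by simp [hv1])
    rw [hc4.eq, mul_assoc, mul_assoc, mul_assoc, ← row_add]
    congr 3
    · simp [hpq.symm]
    · simp [smul_smul]; module

theorem L6b {i j : Fin n} (hij : i ≠ j) (r : A) (u : Fin n → A) (c : A) :
    cj (xx i j r) (Yij i j u c) = Yij i j (u + Pi.single i (r * u j)) c := by
  obtain ⟨k, h1, h2, _⟩ := ex3 i j i
  rw [Yij_eq h1 h2, Yij_eq h1 h2, L2 hij h1.symm h2.symm]
  congr 1
  simp [vv, hij, hij.symm, mul_add, Pi.single_add, sub_sub, mul_left_comm]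

theorem L6c {i j q : Fin n} (hij : i ≠ j) (hqi : q ≠ i) (hqj : q ≠ j) (r : A) (u : Fin n → A) (c : A) :
    cj (xx i q r) (Yij i j u c) = Yij i j (u + Pi.single i (r * u q)) c * Yij q j (u + Pi.single i (r * u q)) (-(r * c)) := by
  obtain ⟨k, h1, h2, h3⟩ := ex3 i j q
  rw [Yij_eq h1 h2, Yij_eq h1 h2, Yij_eq h3 h2, L2 hqi.symm h1.symm h3.symm, ← L3 h1 (vv_zero h1 h2 _ _)
    (vv_zero h3 h2 _ _) (vv_zero hqi.symm hij _ _) (vv_dot _ _ _ _) (vv_dot _ _ _ _)]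
  congr 1
  ext m
  simp only [vv, Pi.add_apply, Pi.sub_apply, Pi.single_eq_same, Pi.single_eq_of_ne hij, Pi.single_eq_of_ne hij.symm,
    Pi.single_eq_of_ne hqi]
  by_cases h : m = j
  · subst h
    simp [hij.symm, hqj.symm]; ring
  by_cases h' : m = q
  · subst h'
    simp [hqi, hqj]; ring
  simp [h, h']

/-- the combined homomorphism -/
noncomputable def YHom (u : Fin n → A) (p : Fin n × Fin n) : Multiplicative A →* SteinbergGroup n A where
  toFun r := Yij p.1 p.2 u r.toAdd
  map_one' := Yij_zero _ _ _
  map_mul' r s := Yij_add _ _ _ _ _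

theorem Y_comm (u : Fin n → A) : Pairwise fun i j => ∀ (x y : Multiplicative A),
    Commute (YHom u i x) (YHom u j y) := by
  intro i j _ x y
  exact L5 _ _ _ _ _ _ _

noncomputable def Y (u : Fin n → A) (w : Matrix (Fin n) (Fin n) A) : SteinbergGroup n A :=
  MonoidHom.noncommPiCoprod _ (Y_comm u) (fun i => Multiplicative.ofAdd (w i.1 i.2))

theorem Y_add (u : Fin n → A) (w w' : Matrix (Fin n) (Fin n) A) : Y u (w + w') = Y u w * Y u w' := by
  unfold Y; rw [← map_mul]; rfl
@[simp] theorem Y_zero (u : Fin n → A) : Y u 0 = 1 := by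
  have := Y_add u 0 0
  rw [add_zero] at this
  exact left_eq_mul.1 this
theorem Y_neg (u : Fin n → A) (w : Matrix (Fin n) (Fin n) A) : Y u (-w) = (Y u w)⁻¹ := by
  rw [eq_inv_iff_mul_eq_one, ← Y_add, neg_add_cancel, Y_zero]
theorem Y_single (u : Fin n → A) (i j : Fin n) (c : A) : Y u (Matrix.single i j c) = Yij i j u c := by
  have : (fun p : Fin n × Fin n => Multiplicative.ofAdd (Matrix.single i j c p.1 p.2))
    = Pi.mulSingle (i, j) (Multiplicative.ofAdd c) := by
    ext p
    by_cases h : p = (i, j)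
    · subst h; simp
    · rw [Pi.mulSingle_eq_of_ne h, Matrix.single_apply_of_ne]
      · rfl
      · rintro ⟨rfl, rfl⟩; exact h rfl
  unfold Y; rw [this, MonoidHom.noncommPiCoprod_mulSingle]; rfl
theorem Y_Y (u : Fin n → A) (w w' : Matrix (Fin n) (Fin n) A) : Commute (Y u w) (Y u w') := by
  unfold Commute SemiconjBy; rw [← Y_add, ← Y_add, add_comm]

attribute [irreducible] Y

theorem indM {P : Matrix (Fin n) (Fin n) A → Prop} (h0 : P 0) (hadd : ∀ u v, P u → P v → P (u + v))
    (hs : ∀ i j r, P (Matrix.single i j r)) (w) : P w := by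
  rw [matrix_eq_sum_single w]
  refine Finset.sum_induction _ P hadd h0 fun i _ => Finset.sum_induction _ P hadd h0 fun j _ => hs _ _ _

theorem Y_smul (t : A) (u : Fin n → A) (w : Matrix (Fin n) (Fin n) A) : Y (t • u) w = Y u ((t * t) • w) := by
  refine indM (A := A) (P := fun w => Y (t • u) w = Y u ((t * t) • w)) ?_ ?_ ?_ w
  · simp
  · intro a b ha hb; rw [Y_add, ha, hb, smul_add, Y_add]
  · intro i j r
    rw [Y_single, Matrix.smul_single, Y_single, Yij_smul, smul_eq_mul, mul_assoc]

theorem Y_xx {p q : Fin n} (hpq : p ≠ q) (r : A) (u : Fin n → A) (w : Matrix (Fin n) (Fin n) A) :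
    cj (xx p q r) (Y u w) = Y (u + Pi.single p (r * u q))
      ((transvection p q (-r))ᵀ * w * transvection p q (-r)) := by
  refine indM (A := A) (P := fun w => cj (xx p q r) (Y u w) = Y (u + Pi.single p (r * u q))
      ((transvection p q (-r))ᵀ * w * transvection p q (-r))) ?_ ?_ ?_ w
  · simp
  · intro a b ha hb; rw [Y_add, cj, map_mul, ← cj, ← cj, ha, hb, mul_add, add_mul, Y_add]
  · intro i j c
    rw [Y_single]
    have e : (transvection p q (-r))ᵀ * single i j c * transvection p q (-r) =
      single i j c + (if i = p then single q j (-(r * c)) else 0) + (if j = p then single i q (-(r * c)) else 0)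
        + (if i = p ∧ j = p then single q q (r * (r * c)) else 0) := by
      unfold transvection
      by_cases hi : i = p
      · subst hi
        by_cases hj : j = i
        · subst hj
          simp [add_mul, mul_add, mul_comm c r, mul_comm (r * c) r]; abel
        · simp [add_mul, mul_add, hj]
      · by_cases hj : j = p
        · subst hj
          simp [add_mul, mul_add, hi, Ne.symm hi, mul_comm]
        · simp [add_mul, mul_add, hi, Ne.symm hi, hj]
    rw [e, Y_add, Y_add, Y_add, Y_single]
    by_cases hi : i = p
    · by_cases hj : j = p
      · subst hj; subst hi
        simp only [Yij_self, cj, map_one, if_true, and_self, Y_single, one_mul, mul_one]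
        rw [Yij_swap, ← Yij_add]; simp
      · subst hi
        simp only [if_true, hj, if_false, and_false, Y_zero, mul_one, Y_single]
        by_cases hqj : q = j
        · subst hqj
          rw [L6b hpq, Yij_self, mul_one]
        · rw [L6c (Ne.symm hj) hpq.symm hqj]
    · by_cases hj : j = p
      · subst hj
        simp only [if_true, hi, if_false, false_and, Y_zero, mul_one, Y_single]
        rw [Yij_swap, Yij_swap i j, Yij_swap i q, neg_neg]
        by_cases hqi : q = i
        · subst hqi
          rw [L6b hpq, Yij_self, mul_one]
        · rw [L6c (Ne.symm hi) hpq.symm hqi]; simp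
      · simp only [hj, hi, if_false, false_and, Y_zero, mul_one]
        rw [L6a hpq (Ne.symm hi) (Ne.symm hj)]

theorem Y_koszul (u : Fin n → A) (τ : Fin n → Fin n → Fin n → A) :
    Y u (fun i j => ∑ k, u k * (τ i j k + τ k i j + τ j k i)) = 1 := by
  have key : ∀ a b c d, Yij a b u (d * u c) * Yij b c u (d * u a) * Yij c a u (d * u b) = 1 := by
    intro a b c d
    by_cases hab : a = b
    · subst hab
      rw [Yij_self, one_mul, Yij_swap, ← Yij_add]; simp
    by_cases hbc : b = c
    · subst hbc
      rw [Yij_self, mul_one, Yij_swap, ← Yij_add]; simp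
    by_cases hca : c = a
    · subst hca
      rw [Yij_self, mul_one, Yij_swap, ← Yij_add]; simp
    obtain ⟨k, ka, kb, kc⟩ := ex3 a b c
    have e : vv a b u (d * u c) + vv b c u (d * u a) + vv c a u (d * u b) = 0 := by
      have h1 : d * u c * u b = d * u b * u c := by ring
      have h2 : d * u c * u a = d * u a * u c := by ring
      have h3 : d * u a * u b = d * u b * u a := by ring
      simp only [vv, h1, h2, h3]; abel
    rw [Yij_eq ka kb, Yij_eq kb kc, Yij_eq kc ka,
      ← L3 ka (vv_zero ka kb _ _) (vv_zero kb kc _ _) (vv_zero hab (Ne.symm hca) _ _) (vv_dot _ _ _ _) (vv_dot _ _ _ _),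
      ← L3 kb (by simp [vv_zero, *]) (vv_zero kc ka _ _) (vv_zero hbc (Ne.symm hab) _ _)
        (by simp [dotProduct_add, vv_dot]) (vv_dot _ _ _ _), e, F_zero]
  have e : (fun i j => ∑ k, u k * (τ i j k + τ k i j + τ j k i) : Matrix (Fin n) (Fin n) A) =
      ∑ a, ∑ b, ∑ c, (single a b (τ a b c * u c) + single b c (τ a b c * u a) + single c a (τ a b c * u b)) := by
    ext i j
    simp only [Matrix.sum_apply, Matrix.add_apply, Matrix.single_apply, Finset.sum_add_distrib, mul_add]
    congr 1
    · congr 1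
      · simp [ite_and, mul_comm]
      · simp [ite_and, mul_comm]
    · simp [ite_and, mul_comm]
  rw [e]
  refine Finset.sum_induction _ (fun w => Y u w = 1) ?_ (Y_zero u) fun i _ =>
    Finset.sum_induction _ (fun w => Y u w = 1) ?_ (Y_zero u) fun j _ =>
    Finset.sum_induction _ (fun w => Y u w = 1) ?_ (Y_zero u) fun k _ => ?_
  · intro a b ha hb; rw [Y_add, ha, hb, one_mul]
  · intro a b ha hb; rw [Y_add, ha, hb, one_mul]
  · intro a b ha hb; rw [Y_add, ha, hb, one_mul]
  · rw [Y_add, Y_add, Y_single, Y_single, Y_single, key]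

theorem Y_std {i j : Fin n} (hij : i ≠ j) (s : A) : Y (Pi.single i 1) (single j i s) = xx i j s := by
  obtain ⟨k, ki, kj, _⟩ := ex3 i j i
  rw [Y_single, Yij_eq kj ki]
  have : vv j i (Pi.single i 1) s = Pi.single j s := by simp [vv, hij.symm]
  rw [this, F, D, col_single, row_single, xx_rel ki.symm kj hij, Pi.single_eq_of_ne ki]
  simp

end four
end SteinPf


namespace SteinPf

section five
open Matrix
variable {n : ℕ} {A B : Type} [CommRing A] [CommRing B]

theorem vms (i j : Fin n) (r s : A) : vecMulVec (Pi.single i r) (Pi.single j s) = single i j (r * s) := by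
  ext a b
  by_cases h : a = i
  · by_cases h' : b = j
    · subst h; subst h'; simp [vecMulVec_apply]
    · simp [vecMulVec_apply, h', Matrix.single_apply, Ne.symm h']
  · simp [vecMulVec_apply, h, Matrix.single_apply, Ne.symm h]

def tvU (i j : Fin n) (h : i ≠ j) (r : A) : (Matrix (Fin n) (Fin n) A)ˣ where
  val := transvection i j r
  inv := transvection i j (-r)
  val_inv := by rw [transvection_mul_transvection_same _ _ h]; simp
  inv_val := by rw [transvection_mul_transvection_same _ _ h]; simp

theorem unit_comm {M : Type*} [Ring M] (a b c : Mˣ) (h : (a * b : M) = c * b * a) : ⁅a, b⁆ = c := by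
  rw [commutatorElement_def, mul_inv_eq_iff_eq_mul, mul_inv_eq_iff_eq_mul]
  ext; simpa using h

def mat : SteinbergGroup n A →* (Matrix (Fin n) (Fin n) A)ˣ :=
  lift tvU
    (by intro i j h r s; ext1; simp only [tvU, Units.val_mul]; rw [transvection_mul_transvection_same _ _ h])
    (by
      intro i j h k hij hhk hjh hik r s
      ext1
      simp only [tvU, Units.val_mul, transvection, mul_add, add_mul, mul_one, one_mul]
      rw [single_mul_single_of_ne _ _ _ _ hjh, single_mul_single_of_ne _ _ _ _ hik.symm]; abel)
    (by
      intro i j k hij hjk hik r s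
      apply unit_comm
      simp only [tvU, transvection, mul_add, add_mul, mul_one, one_mul]
      simp [hij, hjk, hik, hij.symm, hjk.symm, hik.symm]; abel)

theorem mat_xx {i j : Fin n} (h : i ≠ j) (r : A) : (mat (xx i j r) : Matrix (Fin n) (Fin n) A) = transvection i j r := by
  rw [xx_eq h]; exact congrArg Units.val (lift_stx tvU _ _ _ i j h r)
theorem mat_xx_inv {i j : Fin n} (h : i ≠ j) (r : A) :
    ((mat (xx i j r))⁻¹ : (Matrix (Fin n) (Fin n) A)ˣ).val = transvection i j (-r) := by
  rw [← map_inv, ← xx_neg, mat_xx h]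

theorem st_ind' {P : SteinbergGroup n A → Prop} (h1 : P 1)
    (hx : ∀ i j, i ≠ j → ∀ r, P (xx i j r)) (hm : ∀ x y, P x → P y → P (x * y)) (z) : P z :=
  st_induction h1 (fun i j h r => by rw [← xx_eq h]; exact hx i j h r) hm z

def stMap (φ : A →+* B) : SteinbergGroup n A →* SteinbergGroup n B :=
  lift (fun i j h r => stx n B i j h (φ r))
    (by intro i j h r s; rw [stx_add, map_add])
    (by intro i j h k hij hhk hjh hik r s; exact stx_comm _ _ _ _ _ _ hjh hik _ _)
    (by intro i j k hij hjk hik r s; rw [stx_rel _ _ _ _ _ hik, map_mul])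

theorem stMap_xx (φ : A →+* B) (i j : Fin n) (r : A) : stMap φ (xx i j r) = xx i j (φ r) := by
  by_cases h : i = j
  · subst h; simp
  · rw [xx_eq h, xx_eq h, stMap, lift_stx]

theorem stMap_col (φ : A →+* B) (k : Fin n) (u : Fin n → A) : stMap φ (col k u) = col k (φ ∘ u) := by
  refine ind (A := A) (P := fun u => stMap φ (col k u) = col k (φ ∘ u)) ?_ ?_ (fun _ => True) ?_ u (by simp)
  · have : (φ ∘ (0 : Fin n → A)) = 0 := by ext; simp
    rw [this]; simp
  · intro a b ha hb
    have : φ ∘ (a + b) = φ ∘ a + φ ∘ b := by ext; simp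
    rw [col_add, map_mul, ha, hb, this, col_add]
  · intro m _ r
    have : φ ∘ (Pi.single m r) = Pi.single m (φ r) := by
      ext i; by_cases h : i = m
      · subst h; simp
      · simp [h]
    rw [col_single, stMap_xx, this, col_single]
theorem stMap_row (φ : A →+* B) (k : Fin n) (u : Fin n → A) : stMap φ (row k u) = row k (φ ∘ u) := by
  refine ind (A := A) (P := fun u => stMap φ (row k u) = row k (φ ∘ u)) ?_ ?_ (fun _ => True) ?_ u (by simp)
  · have : (φ ∘ (0 : Fin n → A)) = 0 := by ext; simp
    rw [this]; simp
  · intro a b ha hb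
    have : φ ∘ (a + b) = φ ∘ a + φ ∘ b := by ext; simp
    rw [row_add, map_mul, ha, hb, this, row_add]
  · intro m _ r
    have : φ ∘ (Pi.single m r) = Pi.single m (φ r) := by
      ext i; by_cases h : i = m
      · subst h; simp
      · simp [h]
    rw [row_single, stMap_xx, this, row_single]

theorem stMap_F (φ : A →+* B) (k : Fin n) (u v : Fin n → A) : stMap φ (F k u v) = F k (φ ∘ u) (φ ∘ v) := by
  rw [F, map_mul, D, map_commutatorElement, stMap_col, stMap_row, stMap_row, F, D]
  congr 2
  ext i; simp

theorem mat_stMap (φ : A →+* B) (z : SteinbergGroup n A) :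
    (mat (stMap φ z) : Matrix (Fin n) (Fin n) B) = (mat z : Matrix (Fin n) (Fin n) A).map φ := by
  refine st_ind' (P := fun z => (mat (stMap φ z) : Matrix (Fin n) (Fin n) B) = (mat z : Matrix (Fin n) (Fin n) A).map φ)
    ?_ ?_ ?_ z
  · simp
  · intro i j h r
    rw [stMap_xx, mat_xx h, mat_xx h]
    ext a b
    simp [transvection, Matrix.one_apply, Matrix.single_apply, apply_ite φ]
  · intro x y hx hy
    rw [map_mul, map_mul, map_mul, Units.val_mul, Units.val_mul, hx, hy, Matrix.map_mul]

theorem mat_col {k : Fin n} {u : Fin n → A} (hu : u k = 0) :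
    (mat (col k u) : Matrix (Fin n) (Fin n) A) = 1 + vecMulVec u (Pi.single k 1) := by
  have : u k = 0 ∧ (mat (col k u) : Matrix (Fin n) (Fin n) A) = 1 + vecMulVec u (Pi.single k 1) := by
    refine ind (A := A) (P := fun u => u k = 0 ∧ (mat (col k u) : Matrix (Fin n) (Fin n) A) = 1 + vecMulVec u (Pi.single k 1))
      ?_ ?_ (fun m => m ≠ k) ?_ u ?_
    · simp
    · rintro a b ⟨ha, ha'⟩ ⟨hb, hb'⟩
      refine ⟨by simp [ha, hb], ?_⟩
      rw [col_add, map_mul, Units.val_mul, ha', hb', add_vecMulVec]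
      simp [mul_add, add_mul, vecMulVec_mul_vecMulVec, hb]; abel
    · intro m hm r
      refine ⟨by simp [hm.symm], ?_⟩
      rw [col_single, mat_xx hm, transvection]
      simp [vms]
    · intro m hm; push Not at hm; rw [hm, hu]
  exact this.2
theorem mat_row {k : Fin n} {u : Fin n → A} (hu : u k = 0) :
    (mat (row k u) : Matrix (Fin n) (Fin n) A) = 1 + vecMulVec (Pi.single k 1) u := by
  have : u k = 0 ∧ (mat (row k u) : Matrix (Fin n) (Fin n) A) = 1 + vecMulVec (Pi.single k 1) u := by
    refine ind (A := A) (P := fun u => u k = 0 ∧ (mat (row k u) : Matrix (Fin n) (Fin n) A) = 1 + vecMulVec (Pi.single k 1) u)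
      ?_ ?_ (fun m => m ≠ k) ?_ u ?_
    · simp
    · rintro a b ⟨ha, ha'⟩ ⟨hb, hb'⟩
      refine ⟨by simp [ha, hb], ?_⟩
      rw [row_add, map_mul, Units.val_mul, ha', hb', vecMulVec_add]
      simp [mul_add, add_mul, vecMulVec_mul_vecMulVec, ha]; abel
    · intro m hm r
      refine ⟨by simp [hm.symm], ?_⟩
      rw [row_single, mat_xx hm.symm, transvection]
      simp [vms]
    · intro m hm; push Not at hm; rw [hm, hu]
  exact this.2

theorem mat_F {k : Fin n} {u v : Fin n → A} (hv : v k = 0) (h : u ⬝ᵥ v = 0) :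
    (mat (F k u v) : Matrix (Fin n) (Fin n) A) = 1 + vecMulVec u v := by
  have h1 : v ⬝ᵥ z1 k u = 0 := by rw [dotProduct_comm, z1_dot hv, h]
  have e : col k u = col k (z1 k u) := col_congr k (fun i hi => by simp [z1, hi])
  have hU : ∃ c : (Matrix (Fin n) (Fin n) A)ˣ, c.val = 1 + vecMulVec (z1 k u) v := by
    refine ⟨⟨1 + vecMulVec (z1 k u) v, 1 - vecMulVec (z1 k u) v, ?_, ?_⟩, rfl⟩
    · simp [mul_sub, add_mul, vecMulVec_mul_vecMulVec, h1]
    · simp [mul_add, sub_mul, vecMulVec_mul_vecMulVec, h1]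
  obtain ⟨c, hc⟩ := hU
  have hD : mat (D k u v) = c := by
    rw [D, map_commutatorElement]
    apply unit_comm
    rw [e, mat_col (by simp), mat_row hv, hc]
    simp [mul_add, add_mul, vecMulVec_mul_vecMulVec, h1, hv]; abel
  rw [F, map_mul, Units.val_mul, hD, hc, mat_row (by simp [hv])]
  have : u = z1 k u + u k • Pi.single k 1 := by
    ext i; by_cases h : i = k
    · subst h; simp
    · simp [h, z1]
  conv_rhs => rw [this, add_vecMulVec]
  simp [mul_add, add_mul, vecMulVec_mul_vecMulVec, hv, smul_vecMulVec, vecMulVec_smul]; abel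

variable [hn : Fact (4 ≤ n)]

theorem Y_equiv (z : SteinbergGroup n A) (u : Fin n → A) (w : Matrix (Fin n) (Fin n) A) :
    cj z (Y u w) = Y ((mat z).val *ᵥ u) (((mat z)⁻¹).valᵀ * w * ((mat z)⁻¹).val) := by
  refine st_ind' (P := fun z => ∀ u w, cj z (Y u w) = Y ((mat z).val *ᵥ u) (((mat z)⁻¹).valᵀ * w * ((mat z)⁻¹).val))
    ?_ ?_ ?_ z u w
  · intro u w; simp
  · intro i j h r u w
    rw [Y_xx h, mat_xx h, mat_xx_inv h]
    congr 1
    simp [transvection, add_mulVec, single_mulVec]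
    rfl
  · intro x y hx hy u w
    rw [cj_mul, hy, hx, map_mul]
    simp [Matrix.mul_assoc, Matrix.transpose_mul]

theorem stMap_Y (φ : A →+* B) (u : Fin n → A) (w : Matrix (Fin n) (Fin n) A) : stMap φ (Y u w) = Y (φ ∘ u) (w.map φ) := by
  refine indM (A := A) (P := fun w => stMap φ (Y u w) = Y (φ ∘ u) (w.map φ)) ?_ ?_ ?_ w
  · simp
  · intro a b ha hb; rw [Y_add, map_mul, ha, hb, Matrix.map_add _ (map_add φ), Y_add]
  · intro i j r
    have : (single i j r).map φ = single i j (φ r) := by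
      ext a b; simp [Matrix.single_apply, apply_ite φ]
    obtain ⟨k, h1, h2, _⟩ := ex3 i j i
    rw [this, Y_single, Y_single, Yij_eq h1 h2, Yij_eq h1 h2, stMap_F]
    congr 1
    ext m; simp [vv, Pi.single_apply, apply_ite φ]

theorem mat_Y (u : Fin n → A) (w : Matrix (Fin n) (Fin n) A) :
    (mat (Y u w) : Matrix (Fin n) (Fin n) A) = 1 + vecMulVec u ((w - wᵀ) *ᵥ u) := by
  have hz : ∀ w : Matrix (Fin n) (Fin n) A, ((w - wᵀ) *ᵥ u) ⬝ᵥ u = 0 := by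
    intro w
    rw [sub_mulVec, sub_dotProduct, mulVec_transpose, ← dotProduct_mulVec, dotProduct_comm, sub_self]
  refine indM (A := A) (P := fun w => (mat (Y u w) : Matrix (Fin n) (Fin n) A) = 1 + vecMulVec u ((w - wᵀ) *ᵥ u)) ?_ ?_ ?_ w
  · simp
  · intro a b ha hb
    have : a + b - (a + b)ᵀ = (a - aᵀ) + (b - bᵀ) := by rw [transpose_add]; abel
    rw [Y_add, map_mul, Units.val_mul, ha, hb, this, add_mulVec, vecMulVec_add]
    simp only [mul_add, add_mul, mul_one, one_mul, vecMulVec_mul_vecMulVec, hz, zero_smul]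
    simp; abel
  · intro i j r
    obtain ⟨k, h1, h2, _⟩ := ex3 i j i
    rw [Y_single, Yij_eq h1 h2, mat_F (vv_zero h1 h2 _ _) (vv_dot _ _ _ _)]
    congr 2
    ext m
    simp [vv, sub_mulVec, single_mulVec]
    rfl

end five
end SteinPf


namespace SteinPf

structure Loc (A C : Type) [CommRing A] [CommRing C] where
  f : A →+* C
  S : Submonoid A
  J : Ideal C
  σ : J →+ A
  hu : ∀ t ∈ S, ∃ c, f t * c = 1
  hl : ∀ c, ∃ t ∈ S, ∃ α, f α = f t * c
  ht : ∀ α β, f α = f β → ∃ t ∈ S, t * α = t * β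
  h1 : ∀ s, f (σ s) = s
  h2 : ∀ α s, σ (f α • s) = α * σ s

section six
open Matrix
variable {n : ℕ} {A C : Type} [CommRing A] [CommRing C] (L : Loc A C)

theorem lift_vec (u : Fin n → C) : ∃ t ∈ L.S, ∃ v : Fin n → A, ∀ i, L.f (v i) = L.f t * u i := by
  choose t ht α hα using fun i => L.hl (u i)
  refine ⟨∏ i, t i, Submonoid.prod_mem _ fun i _ => ht i, ?_⟩
  have : ∀ i, ∃ d, ∏ i, t i = t i * d := fun i => Finset.dvd_prod_of_mem t (Finset.mem_univ i)
  choose d hd using this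
  refine ⟨fun i => α i * d i, fun i => ?_⟩
  rw [hd i, map_mul, map_mul, hα]; ring

theorem tor_vec (u v : Fin n → A) (h : ∀ i, L.f (u i) = L.f (v i)) : ∃ t ∈ L.S, t • u = t • v := by
  choose t ht hα using fun i => L.ht _ _ (h i)
  refine ⟨∏ i, t i, Submonoid.prod_mem _ fun i _ => ht i, ?_⟩
  ext i
  obtain ⟨d, hd⟩ : t i ∣ ∏ i, t i := Finset.dvd_prod_of_mem t (Finset.mem_univ i)
  simp only [Pi.smul_apply, smul_eq_mul, hd]
  linear_combination d * hα i

/-- lifting data -/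
structure IsLift (u : Fin n → C) (t : A) (c : C) (v : Fin n → A) : Prop where
  mem : t ∈ L.S
  inv : L.f t * c = 1
  eq : ∀ i, L.f (v i) = L.f t * u i

theorem ex_lift (u : Fin n → C) : ∃ p : A × C × (Fin n → A), IsLift L u p.1 p.2.1 p.2.2 := by
  obtain ⟨t, ht, v, hv⟩ := lift_vec L u
  obtain ⟨c, hc⟩ := L.hu t ht
  exact ⟨(t, c, v), ht, hc, hv⟩

theorem ex_lift' (u : Fin n → C) : ∃ t c v, IsLift L u t c v :=
  let ⟨p, h⟩ := ex_lift L u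
  ⟨p.1, p.2.1, p.2.2, h⟩

variable [hn : Fact (4 ≤ n)]

noncomputable def Yb (u : Fin n → C) (m : Fin n → Fin n → L.J) : SteinbergGroup n A :=
  Y (ex_lift L u).choose.2.2 (of fun i j => L.σ (((ex_lift L u).choose.2.1 * (ex_lift L u).choose.2.1) • m i j))

theorem Yb_wd {u : Fin n → C} {t c v t' c' v'} (h : IsLift L u t c v) (h' : IsLift L u t' c' v')
    (m : Fin n → Fin n → L.J) : Y v (of fun i j => L.σ ((c * c) • m i j)) = Y v' (of fun i j => L.σ ((c' * c') • m i j)) := by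
  have key : ∀ {t c v} (_ : IsLift L u t c v) (α : A) (_ : α ∈ L.S) (d : C) (_ : L.f (α * t) * d = 1),
      Y v (of fun i j => L.σ ((c * c) • m i j)) = Y (α • v) (of fun i j => L.σ ((d * d) • m i j)) := by
    intro t c v h α hα d hd
    rw [Y_smul]
    congr 1
    ext i j
    simp only [Matrix.smul_apply, of_apply, smul_eq_mul]
    rw [← L.h2, smul_smul]
    congr 2
    have e : c = L.f α * d := by
      rw [map_mul] at hd
      have := h.inv
      linear_combination (-c) * hd + (L.f α * d) * this
    rw [e, map_mul]; ring
  have : ∀ i, L.f ((t' • v) i) = L.f ((t • v') i) := by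
    intro i
    simp [h.eq, h'.eq]; ring
  obtain ⟨r, hr, hrv⟩ := tor_vec L _ _ this
  obtain ⟨d, hd⟩ := L.hu (r * t' * t) (mul_mem (mul_mem hr h'.mem) h.mem)
  rw [key h (r * t') (mul_mem hr h'.mem) d hd, key h' (r * t) (mul_mem hr h.mem) d (by rw [← hd]; congr 2; ring),
    mul_smul, mul_smul, hrv]

theorem Yb_eq {u : Fin n → C} {t c v} (h : IsLift L u t c v) (m : Fin n → Fin n → L.J) :
    Yb L u m = Y v (of fun i j => L.σ ((c * c) • m i j)) :=
  Yb_wd L (ex_lift L u).choose_spec h m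

theorem Yb_add (u : Fin n → C) (m m' : Fin n → Fin n → L.J) : Yb L u (m + m') = Yb L u m * Yb L u m' := by
  obtain ⟨t, c, v, h⟩ := ex_lift' L u
  rw [Yb_eq L h, Yb_eq L h, Yb_eq L h, ← Y_add]
  congr 1
  ext i j
  simp [Matrix.add_apply]

/-- rank one tensors -/
def T (x y : Fin n → C) (s : L.J) : Fin n → Fin n → L.J := fun i j => (x i * y j) • s

noncomputable def X4 (u x y : Fin n → C) (s : L.J) : SteinbergGroup n A := Yb L u (T L x y s)

theorem X4_add (u x y : Fin n → C) (s s' : L.J) : X4 L u x y (s + s') = X4 L u x y s * X4 L u x y s' := by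
  unfold X4; rw [← Yb_add]; congr 1; ext i j; simp [T]
theorem X4_add_x (u x x' y : Fin n → C) (s : L.J) : X4 L u (x + x') y s = X4 L u x y s * X4 L u x' y s := by
  unfold X4; rw [← Yb_add]; congr 1; ext i j; simp [T, add_mul]
theorem X4_add_y (u x y y' : Fin n → C) (s : L.J) : X4 L u x (y + y') s = X4 L u x y s * X4 L u x y' s := by
  unfold X4; rw [← Yb_add]; congr 1; ext i j; simp [T, add_mul, mul_add]
theorem X4_smul_x (u x y : Fin n → C) (b : C) (s : L.J) : X4 L u (b • x) y s = X4 L u x y (b • s) := by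
  unfold X4; congr 1; ext i j; simp [T]; ring
theorem X4_smul_y (u x y : Fin n → C) (b : C) (s : L.J) : X4 L u x (b • y) s = X4 L u x y (b • s) := by
  unfold X4; congr 1; ext i j; simp [T]; ring

theorem sum_sg {ι : Type*} (F : Finset ι) (a : ι → A) (c : ι → C) (s : L.J) :
    ∑ i ∈ F, a i * L.σ (c i • s) = L.σ ((∑ i ∈ F, L.f (a i) * c i) • s) := by
  rw [Finset.sum_smul, map_sum]
  refine Finset.sum_congr rfl fun i _ => ?_
  rw [← L.h2, smul_smul]

theorem sum_sg' {ι : Type*} (F : Finset ι) (a : ι → A) (c : ι → C) (s : L.J) :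
    ∑ i ∈ F, L.σ (c i • s) * a i = L.σ ((∑ i ∈ F, L.f (a i) * c i) • s) := by
  rw [← sum_sg]
  exact Finset.sum_congr rfl fun i _ => mul_comm _ _

theorem X4_koszul {u x y z : Fin n → C} (hx : x ⬝ᵥ u = 0) (hy : y ⬝ᵥ u = 0) (hz : z ⬝ᵥ u = 1) (s : L.J) :
    X4 L u x y s = 1 := by
  obtain ⟨t, c, v, h⟩ := ex_lift' L u
  rw [X4, Yb_eq L h]
  refine Eq.trans ?_ (Y_koszul v (fun i j k => L.σ ((c * c * c * (x i * y j * z k)) • s)))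
  congr 1
  ext i j
  have hi := h.inv
  simp only [T, of_apply, mul_add, Finset.sum_add_distrib, sum_sg]
  rw [← map_add, ← map_add, ← add_smul, ← add_smul, smul_smul]
  congr 2
  simp only [h.eq]
  have e1 : ∑ k, L.f t * u k * (c * c * c * (x i * y j * z k)) = L.f t * c * c * c * x i * y j * (z ⬝ᵥ u) := by
    rw [dotProduct, Finset.mul_sum]; exact Finset.sum_congr rfl fun k _ => by ring
  have e2 : ∑ k, L.f t * u k * (c * c * c * (x k * y i * z j)) = L.f t * c * c * c * y i * z j * (x ⬝ᵥ u) := by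
    rw [dotProduct, Finset.mul_sum]; exact Finset.sum_congr rfl fun k _ => by ring
  have e3 : ∑ k, L.f t * u k * (c * c * c * (x j * y k * z i)) = L.f t * c * c * c * x j * z i * (y ⬝ᵥ u) := by
    rw [dotProduct, Finset.mul_sum]; exact Finset.sum_congr rfl fun k _ => by ring
  rw [e1, e2, e3, hx, hy, hz]
  linear_combination (- c * c * x i * y j) * hi

theorem X4_equiv (z : SteinbergGroup n A) (u x y : Fin n → C) (s : L.J) :
    cj z (X4 L u x y s) = X4 L ((mat z).val.map L.f *ᵥ u) (x ᵥ* (mat z)⁻¹.val.map L.f) (y ᵥ* (mat z)⁻¹.val.map L.f) s := by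
  obtain ⟨t, c, v, h⟩ := ex_lift' L u
  have h' : IsLift L ((mat z).val.map L.f *ᵥ u) t c ((mat z).val *ᵥ v) := by
    refine ⟨h.mem, h.inv, fun i => ?_⟩
    simp only [mulVec, dotProduct, map_sum, map_mul, h.eq, Finset.mul_sum, map_apply]
    exact Finset.sum_congr rfl fun k _ => by ring
  rw [X4, X4, Yb_eq L h, Yb_eq L h', Y_equiv]
  congr 1
  ext i j
  generalize (mat z)⁻¹.val = g
  simp only [Matrix.mul_apply, of_apply, T, smul_smul, transpose_apply]
  rw [Finset.sum_congr rfl (fun b _ => by rw [mul_comm, sum_sg, ]), sum_sg]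
  congr 2
  simp only [vecMul, dotProduct, map_apply, Finset.mul_sum, Finset.sum_mul]
  refine Finset.sum_congr rfl fun a _ => Finset.sum_congr rfl fun b _ => ?_
  ring

theorem stMap_X4 (u x y : Fin n → C) (s : L.J) :
    stMap L.f (X4 L u x y s) = Y u ((s : C) • vecMulVec x y) := by
  obtain ⟨t, c, v, h⟩ := ex_lift' L u
  rw [X4, Yb_eq L h, stMap_Y]
  have e : L.f ∘ v = L.f t • u := by ext i; simp [h.eq]
  rw [e, Y_smul]
  congr 1
  ext i j
  have := h.inv
  simp [L.h1, T, vecMulVec_apply]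
  linear_combination ((1 + L.f t * c) * x i * y j * s) * this

theorem stMap_X4' {B : Type} [CommRing B] (p : A →+* B) (hp : ∀ s, p (L.σ s) = 0) (u x y : Fin n → C) (s : L.J) :
    stMap p (X4 L u x y s) = 1 := by
  obtain ⟨t, c, v, h⟩ := ex_lift' L u
  rw [X4, Yb_eq L h, stMap_Y]
  have : (of fun i j => L.σ ((c * c) • T L x y s i j)).map p = 0 := by
    ext i j; simp [hp]
  rw [this, Y_zero]

/-- the matrix of X4 -/
theorem mat_X4 {u x y : Fin n → C} {t c v} (h : IsLift L u t c v) (hx : x ⬝ᵥ u = 0) (hy : y ⬝ᵥ u = 1) (s : L.J) :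
    (mat (X4 L u x y s)).val = 1 + vecMulVec v (fun a => L.σ ((c * x a) • s)) := by
  rw [X4, Yb_eq L h, mat_Y]
  congr 2
  ext a
  have hi := h.inv
  simp only [mulVec, dotProduct, T, of_apply, smul_smul, Matrix.sub_apply, transpose_apply, sub_mul, Finset.sum_sub_distrib]
  rw [sum_sg', sum_sg', ← map_sub, ← sub_smul]
  congr 2
  simp only [h.eq]
  have e1 : ∑ b, L.f t * u b * (c * c * (x a * y b)) = L.f t * c * c * x a * (y ⬝ᵥ u) := by
    rw [dotProduct, Finset.mul_sum]; exact Finset.sum_congr rfl fun k _ => by ring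
  have e2 : ∑ b, L.f t * u b * (c * c * (x b * y a)) = L.f t * c * c * y a * (x ⬝ᵥ u) := by
    rw [dotProduct, Finset.mul_sum]; exact Finset.sum_congr rfl fun k _ => by ring
  rw [e1, e2, hx, hy]
  linear_combination (c * x a) * hi

theorem X4_neg (u x y : Fin n → C) (s : L.J) : X4 L u x y (-s) = (X4 L u x y s)⁻¹ := by
  have h0 : X4 L u x y 0 = 1 := by
    have := X4_add L u x y 0 0
    rw [add_zero] at this
    exact left_eq_mul.1 this
  rw [eq_inv_iff_mul_eq_one, ← X4_add, neg_add_cancel, h0]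

theorem mat_X4_inv {u x y : Fin n → C} {t c v} (h : IsLift L u t c v) (hx : x ⬝ᵥ u = 0) (hy : y ⬝ᵥ u = 1) (s : L.J) :
    (mat (X4 L u x y s))⁻¹.val = 1 - vecMulVec v (fun a => L.σ ((c * x a) • s)) := by
  rw [← map_inv, ← X4_neg, mat_X4 L h hx hy, sub_eq_add_neg, ← vecMulVec_neg]
  congr 2
  ext a; simp

theorem matf_X4 {u x y : Fin n → C} (hx : x ⬝ᵥ u = 0) (hy : y ⬝ᵥ u = 1) (s : L.J) :
    (mat (X4 L u x y s)).val.map L.f = 1 + (s : C) • vecMulVec u x := by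
  obtain ⟨t, c, v, h⟩ := ex_lift' L u
  rw [mat_X4 L h hx hy]
  have hi := h.inv
  ext i j
  simp only [map_apply, Matrix.add_apply, map_add, Matrix.one_apply, vecMulVec_apply, map_mul, h.eq, L.h1,
    Matrix.smul_apply, smul_eq_mul, Submodule.coe_smul, apply_ite L.f, map_one, map_zero]
  congr 1
  linear_combination (u i * x j * s) * hi

end six
end SteinPf


namespace SteinPf
section seven
open Matrix
variable {n : ℕ} {A C : Type} [CommRing A] [CommRing C] (L : Loc A C) [hn : Fact (4 ≤ n)]

/-- column of a matrix -/
def co (h : (Matrix (Fin n) (Fin n) C)ˣ) (i : Fin n) : Fin n → C := fun a => h.val a i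
/-- row of the inverse matrix -/
def ro (h : (Matrix (Fin n) (Fin n) C)ˣ) (i : Fin n) : Fin n → C := fun a => h⁻¹.val i a

theorem ro_co (h : (Matrix (Fin n) (Fin n) C)ˣ) (i j : Fin n) : ro h j ⬝ᵥ co h i = if j = i then 1 else 0 := by
  have : (h⁻¹.val * h.val) j i = (1 : Matrix (Fin n) (Fin n) C) j i := by rw [Units.inv_mul]
  rw [Matrix.mul_apply, Matrix.one_apply] at this
  exact this

theorem ro_co_ne (h : (Matrix (Fin n) (Fin n) C)ˣ) {i j : Fin n} (hij : j ≠ i) : ro h j ⬝ᵥ co h i = 0 := by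
  rw [ro_co, if_neg hij]
theorem ro_co_self (h : (Matrix (Fin n) (Fin n) C)ˣ) (i : Fin n) : ro h i ⬝ᵥ co h i = 1 := by
  rw [ro_co, if_pos rfl]

noncomputable def E (i j : Fin n) (b : C) : (Matrix (Fin n) (Fin n) C)ˣ := mat (xx i j b)

theorem E_val {i j : Fin n} (hij : i ≠ j) (b : C) : (E i j b).val = transvection i j b := mat_xx hij b
theorem E_inv_val {i j : Fin n} (hij : i ≠ j) (b : C) : (E i j b)⁻¹.val = transvection i j (-b) := mat_xx_inv hij b

theorem co_E_ne (h : (Matrix (Fin n) (Fin n) C)ˣ) {i j : Fin n} (hij : i ≠ j) (b : C) {k : Fin n} (hk : k ≠ j) :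
    co (h * E i j b) k = co h k := by
  ext a
  simp only [co, Units.val_mul, E_val hij]
  exact mul_transvection_apply_of_ne _ _ _ _ hk _ _

theorem co_E_same (h : (Matrix (Fin n) (Fin n) C)ˣ) {i j : Fin n} (hij : i ≠ j) (b : C) :
    co (h * E i j b) j = co h j + b • co h i := by
  ext a
  simp only [co, Units.val_mul, E_val hij, Pi.add_apply, Pi.smul_apply, smul_eq_mul]
  exact mul_transvection_apply_same _ _ _ _ _

theorem ro_E_ne (h : (Matrix (Fin n) (Fin n) C)ˣ) {i j : Fin n} (hij : i ≠ j) (b : C) {k : Fin n} (hk : k ≠ i) :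
    ro (h * E i j b) k = ro h k := by
  ext a
  simp only [ro, _root_.mul_inv_rev, Units.val_mul, E_inv_val hij]
  exact transvection_mul_apply_of_ne _ _ _ _ hk _ _

theorem ro_E_same (h : (Matrix (Fin n) (Fin n) C)ˣ) {i j : Fin n} (hij : i ≠ j) (b : C) :
    ro (h * E i j b) i = ro h i + (-b) • ro h j := by
  ext a
  simp only [ro, _root_.mul_inv_rev, Units.val_mul, E_inv_val hij, Pi.add_apply, Pi.smul_apply, smul_eq_mul]
  exact transvection_mul_apply_same _ _ _ _ _

theorem hEh (h : (Matrix (Fin n) (Fin n) C)ˣ) {i j : Fin n} (hij : i ≠ j) (b : C) :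
    (h * E i j b * h⁻¹).val = 1 + b • vecMulVec (co h i) (ro h j) := by
  have e : single i j b = b • vecMulVec (Pi.single i 1) (Pi.single j (1 : C)) := by
    rw [vms, smul_single]; simp
  rw [Units.val_mul, Units.val_mul, E_val hij, transvection, mul_add, add_mul, mul_one, Units.mul_inv, e]
  congr 1
  rw [Matrix.mul_smul, Matrix.smul_mul, mul_vecMulVec, vecMulVec_mul]
  congr 2
  · ext a; simp [co]
  · ext a; simp [ro]

noncomputable def XX (h : (Matrix (Fin n) (Fin n) C)ˣ) (i j : Fin n) (s : L.J) : SteinbergGroup n A :=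
  X4 L (co h i) (ro h j) (ro h i) s

variable (h : (Matrix (Fin n) (Fin n) C)ˣ)

theorem XX_add (i j : Fin n) (s t : L.J) : XX L h i j (s + t) = XX L h i j s * XX L h i j t := X4_add ..
theorem XX_neg (i j : Fin n) (s : L.J) : XX L h i j (-s) = (XX L h i j s)⁻¹ := X4_neg ..

theorem XX_equiv (z : SteinbergGroup n A) (i j : Fin n) (s : L.J) :
    cj z (XX L h i j s) = XX L (mat (stMap L.f z) * h) i j s := by
  have e1 : ∀ i, co (mat (stMap L.f z) * h) i = (mat z).val.map L.f *ᵥ co h i := by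
    intro i
    ext a
    simp only [co, Units.val_mul, mat_stMap, Matrix.mul_apply, mulVec, dotProduct]
  have e2 : ∀ i, ro (mat (stMap L.f z) * h) i = ro h i ᵥ* (mat z)⁻¹.val.map L.f := by
    intro i
    ext a
    rw [← map_inv]
    simp only [ro, _root_.mul_inv_rev, ← map_inv]
    simp only [Units.val_mul, mat_stMap, Matrix.mul_apply, vecMul, dotProduct]
    rfl
  rw [XX, X4_equiv, XX, e1, e2, e2]

theorem XX_one {i j : Fin n} (hij : i ≠ j) (s : L.J) : XX L 1 i j s = xx i j (L.σ s) := by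
  have e1 : IsLift L (co (1 : (Matrix (Fin n) (Fin n) C)ˣ) i) 1 1 (Pi.single i 1) := by
    refine ⟨one_mem _, by simp, fun a => ?_⟩
    simp [co, Matrix.one_apply, Pi.single_apply, apply_ite L.f]
  rw [XX, X4, Yb_eq L e1, ← Y_std hij]
  congr 1
  ext a b
  simp only [T, ro, inv_one, Units.val_one, Matrix.one_apply, of_apply, single_apply]
  by_cases h1 : j = a <;> by_cases h2 : i = b <;> simp [h1, h2]

theorem XX_stMap {i j : Fin n} (hij : i ≠ j) (q : SteinbergGroup n A) (s : L.J) :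
    XX L (mat (stMap L.f q)) i j s = cj q (xx i j (L.σ s)) := by
  rw [← XX_one L hij, XX_equiv, mul_one]

theorem mat_XX {i j : Fin n} (hij : i ≠ j) (s : L.J) :
    mat (stMap L.f (XX L h i j s)) = h * E i j (s : C) * h⁻¹ := by
  apply Units.ext
  rw [mat_stMap, hEh h hij, XX, matf_X4 L (ro_co_ne h hij.symm) (ro_co_self h i)]

theorem XX_cj {i j : Fin n} (hij : i ≠ j) (s : L.J) (k l : Fin n) (t : L.J) :
    cj (XX L h i j s) (XX L h k l t) = XX L (h * E i j (s : C)) k l t := by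
  rw [XX_equiv, mat_XX L h hij, inv_mul_cancel_right]

theorem A3a {i j k l : Fin n} (hij : i ≠ j) (hkl : k ≠ l) (hkj : k ≠ j) (hli : l ≠ i) (b : C) (s : L.J) :
    XX L (h * E i j b) k l s = XX L h k l s := by
  rw [XX, co_E_ne h hij b hkj, ro_E_ne h hij b hli, XX]
  by_cases hki : k = i
  · subst hki
    rw [ro_E_same h hij, X4_add_y, X4_koszul L (y := (-b) • ro h j) (ro_co_ne h hli) _ (ro_co_self h k), mul_one]
    rw [smul_dotProduct, ro_co_ne h hij.symm, smul_zero]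
  · rw [ro_E_ne h hij b hki]

theorem A3b {i j k : Fin n} (hij : i ≠ j) (hki : k ≠ i) (hkj : k ≠ j) (b : C) (s : L.J) :
    XX L (h * E i j b) k i s = XX L h k i s * XX L h k j (-(b • s)) := by
  rw [XX, co_E_ne h hij b hkj, ro_E_same h hij b, ro_E_ne h hij b hki, X4_add_x, X4_smul_x, XX, XX, neg_smul]

theorem XX_comm {i j k l : Fin n} (hij : i ≠ j) (hkl : k ≠ l) (hjk : j ≠ k) (hil : i ≠ l) (s t : L.J) :
    Commute (XX L h i j s) (XX L h k l t) := by
  apply comm_of_cj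
  rw [XX_cj L h hij, A3a L h hij hkl hjk.symm hil.symm]

theorem naturality {i j : Fin n} (hij : i ≠ j) (q : SteinbergGroup n C) (s : L.J) :
    stMap L.f (XX L (mat q) i j s) = cj q (xx i j (s : C)) := by
  rw [XX, stMap_X4, ← Y_std hij, Y_equiv]
  congr 1
  · ext a; simp [co]
  · ext a b
    rw [show single j i (s : C) = (s : C) • vecMulVec (Pi.single j 1) (Pi.single i 1) by rw [vms, smul_single]; simp]
    rw [Matrix.mul_smul, Matrix.smul_mul, mul_vecMulVec, vecMulVec_mul]
    simp [vecMulVec_apply, ro]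

end seven
end SteinPf


namespace SteinPf
section eight
open Matrix
variable {n : ℕ} {A C : Type} [CommRing A] [CommRing C] (L : Loc A C) [hn : Fact (4 ≤ n)]

theorem mat_Y_rank1 {u x y : Fin n → C} (hx : x ⬝ᵥ u = 0) (hy : y ⬝ᵥ u = 1) (c : C) :
    (mat (Y u (c • vecMulVec x y))).val = 1 + c • vecMulVec u x := by
  rw [mat_Y]
  congr 1
  rw [← vecMulVec_smul c u x]
  congr 1
  rw [transpose_smul, transpose_vecMulVec, ← smul_sub, smul_mulVec, sub_mulVec, vecMulVec_mulVec, vecMulVec_mulVec, hx, hy]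
  simp

theorem lift_dot {u x : Fin n → C} {uu xt : Fin n → A} {α β : C} (hu : ∀ i, L.f (uu i) = α * u i)
    (hx : ∀ i, L.f (xt i) = β * x i) : L.f (xt ⬝ᵥ uu) = α * β * (x ⬝ᵥ u) := by
  simp only [dotProduct, map_sum, map_mul, hu, hx, Finset.mul_sum]
  exact Finset.sum_congr rfl fun k _ => by ring

theorem small (h : (Matrix (Fin n) (Fin n) C)ˣ) {i j : Fin n} (hij : i ≠ j) (b : C) :
    ∃ t0 ∈ L.S, ∀ t ∈ L.S, ∃ W : SteinbergGroup n A,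
      mat (stMap L.f W) = h * E i j (L.f (t0 * t) * b) * h⁻¹ ∧
      ∀ k, k ≠ i → k ≠ j → ∀ s, cj W (XX L h j k s) = XX L h j k s * XX L h i k ((L.f (t0 * t) * b) • s) := by
  obtain ⟨tu, htu, uu, hu⟩ := lift_vec L (co h i)
  obtain ⟨tx, htx, xt, hx⟩ := lift_vec L (b • ro h j)
  obtain ⟨ty, hty, yt, hy⟩ := lift_vec L (ro h i)
  obtain ⟨cu, hcu⟩ := L.hu tu htu
  have hL : IsLift L (co h i) tu cu uu := ⟨htu, hcu, hu⟩
  refine ⟨tx * ty * (tu * tu), mul_mem (mul_mem htx hty) (mul_mem htu htu), fun t ht => ?_⟩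
  set c : C := L.f (tx * ty * (tu * tu) * t) * b with hc
  have hW : mat (stMap L.f (Y uu (t • vecMulVec xt yt))) = h * E i j c * h⁻¹ := by
    apply Units.ext
    rw [hEh h hij, ← mat_Y_rank1 (ro_co_ne h hij.symm) (ro_co_self h i), stMap_Y]
    congr 2
    have e : L.f ∘ uu = L.f tu • co h i := by ext a; simp [hu]
    rw [e, Y_smul]
    congr 1
    ext a d
    simp [vecMulVec_apply, hx, hy, hc]; ring
  refine ⟨Y uu (t • vecMulVec xt yt), hW, fun k hki hkj s => ?_⟩
  set W := Y uu (t • vecMulVec xt yt) with hWd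
  obtain ⟨tv, cv, v, hv⟩ := ex_lift' L (co h j)
  have hm := mat_X4 L hv (ro_co_ne h hkj) (ro_co_self h j) s
  have hmi := mat_X4_inv L hv (ro_co_ne h hkj) (ro_co_self h j) s
  change (mat (XX L h j k s)).val = _ at hm
  change (mat (XX L h j k s))⁻¹.val = _ at hmi
  set g : Fin n → A := fun a => L.σ ((cv * ro h k a) • s) with hg
  have e1 : g ⬝ᵥ uu = 0 := by
    simp only [dotProduct, hg]
    rw [sum_sg']
    have : ∑ a, L.f (uu a) * (cv * ro h k a) = L.f tu * cv * (ro h k ⬝ᵥ co h i) := by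
      rw [dotProduct, Finset.mul_sum]
      exact Finset.sum_congr rfl fun a _ => by rw [hu]; ring
    rw [this, ro_co_ne h hki]; simp
  have e2 : (mat (XX L h j k s)).val *ᵥ uu = uu := by
    rw [hm, add_mulVec, vecMulVec_mulVec, e1]; simp
  have e3 : ∀ z : Fin n → A, z ᵥ* (mat (XX L h j k s))⁻¹.val = z - (z ⬝ᵥ v) • g := by
    intro z
    rw [hmi, vecMul_sub, vecMul_vecMulVec]; simp
  have e4 : (yt ⬝ᵥ v) • g = 0 := by
    ext a
    simp only [Pi.smul_apply, smul_eq_mul, hg, Pi.zero_apply]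
    rw [← L.h2, lift_dot L hv.eq hy, ro_co_ne h hij]; simp
  have e5 : (xt ⬝ᵥ v) • g = fun a => L.σ ((L.f tx * b * ro h k a) • s) := by
    ext a
    simp only [Pi.smul_apply, smul_eq_mul, hg]
    rw [← L.h2, lift_dot L hv.eq hx, smul_dotProduct, ro_co_self, smul_smul]
    congr 2
    have := hv.inv
    simp only [smul_eq_mul]
    linear_combination (L.f tx * b * ro h k a) * this
  have hQ : Y uu (t • vecMulVec ((xt ⬝ᵥ v) • g) yt) = XX L h i k (c • s) := by
    rw [XX, X4, Yb_eq L hL, e5]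
    congr 1
    ext a d
    simp only [Matrix.smul_apply, vecMulVec_apply, of_apply, T, smul_smul, smul_eq_mul]
    rw [mul_comm (L.σ _), ← L.h2, ← L.h2, smul_smul, smul_smul, hy]
    congr 2
    rw [hc]
    simp only [map_mul]
    linear_combination (-(L.f t * L.f ty * ro h i d * L.f tx * b * ro h k a) * (1 + L.f tu * cu)) * hcu
  have hZ : cj (XX L h j k s) W = W * (XX L h i k (c • s))⁻¹ := by
    rw [hWd, Y_equiv, e2, ← hQ, ← Y_neg, ← Y_add]
    congr 1
    rw [Matrix.mul_smul, Matrix.smul_mul, mul_vecMulVec, vecMulVec_mul, mulVec_transpose, e3, e3, e4, sub_zero,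
      sub_vecMulVec, smul_sub, sub_eq_add_neg]
  have hWQ : cj W (XX L h i k (c • s)) = XX L h i k (c • s) := by
    rw [XX_equiv, hW, inv_mul_cancel_right, A3a L h hij hki.symm hij hki]
  have hQZ := XX_comm L h hki.symm hkj.symm hkj hki.symm (c • s) s
  rw [← hQZ.eq]
  generalize XX L h i k (c • s) = Q at *
  generalize XX L h j k s = Z at *
  simp only [cj, MulAut.conj_apply] at *
  have hWQ' : W * Q = Q * W := by rw [mul_inv_eq_iff_eq_mul] at hWQ; exact hWQ
  rw [mul_inv_eq_iff_eq_mul] at hZ ⊢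
  have h3 : W * Q⁻¹ = Q⁻¹ * W := (show Commute W Q from hWQ').inv_right.eq
  rw [mul_assoc Q, hZ, h3]; group

theorem A3c (h : (Matrix (Fin n) (Fin n) C)ˣ) {i j k : Fin n} (hij : i ≠ j) (hki : k ≠ i) (hkj : k ≠ j) (b : C) (s : L.J) :
    XX L (h * E i j b) j k s = XX L h j k s * XX L h i k (b • s) := by
  obtain ⟨l, hli, hlj, hlk⟩ := ex3 i j k
  obtain ⟨t1, ht1, H1⟩ := small L h hli.symm b
  obtain ⟨t2, ht2, H2⟩ := small L h hlj.symm 1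
  obtain ⟨t3, ht3, H3⟩ := small L (h * E i j b) hlj.symm 1
  obtain ⟨W1, M1, N1⟩ := H1 (t2 * t3) (mul_mem ht2 ht3)
  obtain ⟨W2, M2, N2⟩ := H2 (t1 * t3) (mul_mem ht1 ht3)
  obtain ⟨W3, M3, N3⟩ := H3 (t1 * t2) (mul_mem ht1 ht2)
  rw [show t2 * (t1 * t3) = t1 * (t2 * t3) by ring] at M2 N2
  rw [show t3 * (t1 * t2) = t1 * (t2 * t3) by ring] at M3 N3
  obtain ⟨d, hd⟩ := L.hu (t1 * (t2 * t3)) (mul_mem ht1 (mul_mem ht2 ht3))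
  set c := L.f (t1 * (t2 * t3)) with hc
  rw [mul_one] at M2 M3
  simp only [mul_one] at N2 N3
  have hcd : ∀ s : L.J, c • d • s = s := fun s => by rw [smul_smul, hd, one_smul]
  have a1 := congrArg (cj W2) (N1 k hki hlk.symm (d • s))
  rw [XX_equiv, M1, inv_mul_cancel_right, XX_equiv, M2] at a1
  rw [cj, map_mul, ← cj, ← cj, N2 k hkj hlk.symm, XX_equiv L h, M2, inv_mul_cancel_right,
    A3a L h hlj.symm hki.symm hli.symm hkj] at a1
  have a2 := N3 k hkj hlk.symm (d • s)
  rw [XX_equiv, M3, inv_mul_cancel_right, A3a L h hij hlk hlj hki] at a2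
  have a3 : h * E i j b * E j l c = h * E j l c * h⁻¹ * (h * E i l (c * b)) * E i j b := by
    have r1 := xx_rel hij hlj.symm hli.symm b c
    rw [commutatorElement_def, mul_inv_eq_iff_eq_mul, mul_inv_eq_iff_eq_mul, 
      (xx_comm hlj hli.symm (b * c) c : Commute (xx i l (b * c)) (xx j l c)).eq] at r1
    have r2 := congrArg mat r1
    simp only [map_mul] at r2
    simp only [E, mul_assoc, r2, mul_comm c b, inv_mul_cancel_left]
  rw [a3, A3a L _ hij hlk hlj hki, a1, mul_assoc] at a2
  have a4 := mul_left_cancel a2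
  rw [hcd, mul_comm c b, mul_smul, hcd] at a4
  exact a4.symm

theorem XX_rel (h : (Matrix (Fin n) (Fin n) C)ˣ) {i j k : Fin n} (hij : i ≠ j) (hjk : j ≠ k) (hik : i ≠ k) (s t : L.J) :
    ⁅XX L h i j s, XX L h j k t⁆ = XX L h i k ((s : C) • t) := by
  have := XX_cj L h hij s j k t
  rw [A3c L h hij hik.symm hjk.symm, (XX_comm L h hjk hik hik.symm hjk t _).eq] at this
  rw [commutatorElement_def, mul_inv_eq_iff_eq_mul]
  exact this

end eight
end SteinPf


namespace SteinPf
section nine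
open Matrix
variable {n : ℕ} {A C : Type} [CommRing A] [CommRing C] (L : Loc A C) [hn : Fact (4 ≤ n)]

abbrev PS (n : ℕ) (A C : Type) [CommRing A] [CommRing C] := (Matrix (Fin n) (Fin n) C)ˣ × SteinbergGroup n A

def tau : SteinbergGroup n C →* Equiv.Perm (PS n A C) where
  toFun g := (Equiv.mulRight (mat g)⁻¹).prodCongr (Equiv.refl _)
  map_one' := by ext1 ⟨h, y⟩; simp
  map_mul' g g' := by ext1 ⟨h, y⟩; simp [mul_assoc]

theorem tau_apply (g : SteinbergGroup n C) (h) (y : SteinbergGroup n A) : tau g (h, y) = (h * (mat g)⁻¹, y) := rfl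

noncomputable def Q (i j : Fin n) (s : L.J) : Equiv.Perm (PS n A C) where
  toFun p := (p.1, XX L p.1 i j s * p.2)
  invFun p := (p.1, (XX L p.1 i j s)⁻¹ * p.2)
  left_inv p := by simp
  right_inv p := by simp

theorem Q_apply (i j : Fin n) (s : L.J) (h) (y : SteinbergGroup n A) : Q L i j s (h, y) = (h, XX L h i j s * y) := rfl

theorem Q_add (i j : Fin n) (s t : L.J) : Q L i j (s + t) = (Q L i j s * Q L i j t : Equiv.Perm (PS n A C)) := by
  ext1 ⟨h, y⟩
  simp only [Equiv.Perm.mul_apply, Q_apply, XX_add, mul_assoc]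

theorem Q_comm {i j k l : Fin n} (hij : i ≠ j) (hkl : k ≠ l) (hjk : j ≠ k) (hil : i ≠ l) (s t : L.J) :
    Commute (Q L i j s : Equiv.Perm (PS n A C)) (Q L k l t) := by
  refine Equiv.ext ?_
  rintro ⟨h, y⟩
  simp only [Equiv.Perm.mul_apply, Q_apply, ← mul_assoc, (XX_comm L h hij hkl hjk hil s t).eq]

theorem Q_rel {i j k : Fin n} (hij : i ≠ j) (hjk : j ≠ k) (hik : i ≠ k) (s t : L.J) :
    ⁅(Q L i j s : Equiv.Perm (PS n A C)), Q L j k t⁆ = Q L i k ((s : C) • t) := by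
  rw [commutatorElement_def, mul_inv_eq_iff_eq_mul, mul_inv_eq_iff_eq_mul]
  refine Equiv.ext ?_
  rintro ⟨h, y⟩
  have := XX_rel L h hij hjk hik s t
  rw [commutatorElement_def, mul_inv_eq_iff_eq_mul, mul_inv_eq_iff_eq_mul] at this
  simp only [Equiv.Perm.mul_apply, Q_apply, ← mul_assoc, this]

theorem tQ (i j k l : Fin n) (b : C) (s : L.J) (h) (y : SteinbergGroup n A) :
    (cj (tau (xx i j b)) (Q L k l s)) (h, y) = (h, XX L (h * E i j b) k l s * y) := by
  simp only [cj, MulAut.conj_apply, Equiv.Perm.mul_apply, ← map_inv, tau_apply, Q_apply, inv_inv]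
  simp [E]

theorem tQ_a {i j k l : Fin n} (hij : i ≠ j) (hkl : k ≠ l) (hkj : k ≠ j) (hli : l ≠ i) (b : C) (s : L.J) :
    Commute (tau (xx i j b) : Equiv.Perm (PS n A C)) (Q L k l s) := by
  apply comm_of_cj
  refine Equiv.ext ?_
  rintro ⟨h, y⟩
  rw [tQ, A3a L h hij hkl hkj hli, Q_apply]

theorem tQ_c {i j k : Fin n} (hij : i ≠ j) (hki : k ≠ i) (hkj : k ≠ j) (b : C) (s : L.J) :
    ⁅(tau (xx i j b) : Equiv.Perm (PS n A C)), Q L j k s⁆ = Q L i k (b • s) := by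
  rw [commutatorElement_def, mul_inv_eq_iff_eq_mul, ← (Q_comm L hkj.symm hki.symm hki hkj.symm _ _).eq]
  refine Equiv.ext ?_
  rintro ⟨h, y⟩
  have := tQ L i j j k b s h y
  simp only [cj, MulAut.conj_apply] at this
  rw [this, A3c L h hij hki hkj, Equiv.Perm.mul_apply, Q_apply, Q_apply, mul_assoc]

theorem tQ_b {i j k : Fin n} (hij : i ≠ j) (hki : k ≠ i) (hkj : k ≠ j) (b : C) (s : L.J) :
    ⁅Q L k i s, (tau (xx i j b) : Equiv.Perm (PS n A C))⁆ = Q L k j (b • s) := by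
  have h0 : Q L k j (-(b • s)) = (Q L k j (b • s) : Equiv.Perm (PS n A C))⁻¹ := by
    rw [eq_inv_iff_mul_eq_one, ← Q_add, neg_add_cancel]
    refine Equiv.ext ?_
    rintro ⟨h, y⟩
    have := XX_add L h k j 0 0
    rw [add_zero] at this
    rw [Q_apply, left_eq_mul.1 this, one_mul]; rfl
  rw [← commutatorElement_inv, inv_eq_iff_eq_inv, ← h0]
  rw [commutatorElement_def, mul_inv_eq_iff_eq_mul, ← (Q_comm L hki hkj hki.symm hkj _ _).eq]
  refine Equiv.ext ?_
  rintro ⟨h, y⟩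
  have := tQ L i j k i b s h y
  simp only [cj, MulAut.conj_apply] at this
  rw [this, A3b L h hij hki hkj, Equiv.Perm.mul_apply, Q_apply, Q_apply, mul_assoc]

theorem four {G : Type*} [Group G] {p p' q q' c1 c2 c3 c4 : G} (h1 : ⁅p, q⁆ = c1) (h2 : ⁅p, q'⁆ = c2)
    (h3 : ⁅p', q⁆ = c3) (h4 : ⁅p', q'⁆ = c4) (k3 : Commute p c3) (k4 : Commute p c4) (l2 : Commute q c2)
    (l4 : Commute q c4) (m : Commute p ⁅p', q * q'⁆ ) : ⁅p * p', q * q'⁆ = c3 * c4 * (c1 * c2) := by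
  rw [comm_mul_left, cj_of_comm m, comm_mul_right, comm_mul_right, h1, h2, h3, h4, cj_of_comm l2, cj_of_comm l4]

variable (ε : C →+* C) (hε : ∀ c, c - ε c ∈ L.J)

noncomputable def gen (i j : Fin n) (_ : i ≠ j) (c : C) : Equiv.Perm (PS n A C) :=
  Q L i j ⟨c - ε c, hε c⟩ * tau (xx i j (ε c))

noncomputable def Phi : SteinbergGroup n C →* Equiv.Perm (PS n A C) :=
  lift (gen L ε hε)
    (by
      intro i j hij r s
      have e : (⟨r + s - ε (r + s), hε _⟩ : L.J) = ⟨r - ε r, hε r⟩ + ⟨s - ε s, hε s⟩ := by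
        ext; simp; ring
      rw [gen, gen, gen, e, Q_add, map_add, xx_add, map_mul, mul_assoc,
        ← mul_assoc (tau _), (tQ_a L hij hij hij hij.symm (ε r) ⟨s - ε s, hε s⟩).eq]
      simp only [mul_assoc])
    (by
      intro i j h k hij hhk hjh hik r s
      refine Commute.mul_left (Commute.mul_right ?_ ?_) (Commute.mul_right ?_ ?_)
      · exact Q_comm L hij hhk hjh hik _ _
      · exact (tQ_a L hhk hij hik hjh _ _).symm
      · exact tQ_a L hij hhk hjh.symm hik.symm _ _
      · exact (xx_comm hjh hik _ _).map _)
    (by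
      intro i j k hij hjk hik r s
      have c4 : ⁅(tau (xx i j (ε r)) : Equiv.Perm (PS n A C)), (tau (xx j k (ε s)) : Equiv.Perm (PS n A C))⁆ = tau (xx i k (ε (r * s))) := by
        rw [← map_commutatorElement, xx_rel hij hjk hik, map_mul]
      have c3 := tQ_c L hij hik.symm hjk.symm (ε r) ⟨s - ε s, hε s⟩
      have c2 := tQ_b L hjk hij hik (ε s) ⟨r - ε r, hε r⟩
      have c1 := Q_rel L hij hjk hik ⟨r - ε r, hε r⟩ ⟨s - ε s, hε s⟩
      have k3 : ∀ t, Commute (Q L i j ⟨r - ε r, hε r⟩ : Equiv.Perm (PS n A C)) (Q L i k t) := fun t =>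
        Q_comm L hij hik hij.symm hik _ _
      have k4 : ∀ t, Commute (Q L i j ⟨r - ε r, hε r⟩ : Equiv.Perm (PS n A C)) (tau (xx i k t)) := fun t =>
        (tQ_a L hik hij hik hij.symm _ _).symm
      have l2 : ∀ t, Commute (Q L j k ⟨s - ε s, hε s⟩ : Equiv.Perm (PS n A C)) (Q L i k t) := fun t =>
        Q_comm L hjk hik hik.symm hjk _ _
      have l4 : ∀ t, Commute (Q L j k ⟨s - ε s, hε s⟩ : Equiv.Perm (PS n A C)) (tau (xx i k t)) := fun t =>
        (tQ_a L hik hjk hjk hik.symm _ _).symm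
      have m : Commute (Q L i j ⟨r - ε r, hε r⟩ : Equiv.Perm (PS n A C))
          ⁅(tau (xx i j (ε r)) : Equiv.Perm (PS n A C)), Q L j k ⟨s - ε s, hε s⟩ * tau (xx j k (ε s))⁆ := by
        rw [comm_mul_right, c3, c4, cj_of_comm (l4 _)]
        exact (k3 _).mul_right (k4 _)
      rw [gen, gen, gen, four c1 c2 c3 c4 (k3 _) (k4 _) (l2 _) (l4 _) m]
      rw [mul_assoc, ((tQ_a L hik hik hik hik.symm _ _).mul_right (tQ_a L hik hik hik hik.symm _ _)).eq,
        ← mul_assoc, ← Q_add, ← Q_add]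
      congr 2
      ext
      simp
      ring)

theorem Phi_xx {i j : Fin n} (hij : i ≠ j) (c : C) :
    Phi L ε hε (xx i j c) = Q L i j ⟨c - ε c, hε c⟩ * tau (xx i j (ε c)) := by
  rw [xx_eq hij]; exact lift_stx (gen L ε hε) _ _ _ i j hij c

theorem Phi_inj (δ : A →+* A) (hδ : ∀ α, L.f (δ α) = ε (L.f α)) (hσ : ∀ α, L.σ ⟨L.f α - ε (L.f α), hε _⟩ = α - δ α)
    (z : SteinbergGroup n A) : ∀ (q y : SteinbergGroup n A), Phi L ε hε (stMap L.f z) (mat (stMap L.f q), y) =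
      (mat (stMap L.f (q * (stMap δ z)⁻¹)), q * (stMap δ z)⁻¹ * z * q⁻¹ * y) := by
  refine st_ind' (P := fun z => ∀ (q y : SteinbergGroup n A), Phi L ε hε (stMap L.f z) (mat (stMap L.f q), y) =
      (mat (stMap L.f (q * (stMap δ z)⁻¹)), q * (stMap δ z)⁻¹ * z * q⁻¹ * y)) ?_ ?_ ?_ z
  · intro q y; simp
  · intro i j hij α q y
    have e : mat (stMap L.f q) * (mat (xx i j (ε (L.f α))))⁻¹ = mat (stMap L.f (q * (stMap δ (xx i j α))⁻¹)) := by
      rw [stMap_xx, map_mul, map_inv, map_mul, map_inv, stMap_xx, hδ]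
    rw [stMap_xx, Phi_xx L ε hε hij, Equiv.Perm.mul_apply, tau_apply, e, Q_apply, XX_stMap L hij, hσ, stMap_xx]
    refine Prod.ext rfl ?_
    have : xx i j (α - δ α) = xx i j α * (xx i j (δ α))⁻¹ := by rw [sub_eq_add_neg, xx_add, xx_neg]
    simp only [cj, MulAut.conj_apply, this]
    group
  · intro z1 z2 h1 h2 q y
    rw [map_mul, map_mul, Equiv.Perm.mul_apply, h2, h1]
    refine Prod.ext ?_ ?_
    · simp [mul_assoc]
    · simp [mul_assoc]

theorem Phi_surj {B : Type} [CommRing B] (p : A →+* B) (hp : ∀ s, p (L.σ s) = 0)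
    (w : SteinbergGroup n C) : ∀ (q : SteinbergGroup n C) (y : SteinbergGroup n A), ∃ y', Phi L ε hε w (mat q, y) =
      (mat (q * (stMap ε w)⁻¹), y') ∧ stMap L.f y' = q * (stMap ε w)⁻¹ * w * q⁻¹ * stMap L.f y ∧ stMap p y' = stMap p y := by
  refine st_ind' (P := fun w => ∀ (q : SteinbergGroup n C) (y : SteinbergGroup n A), ∃ y', Phi L ε hε w (mat q, y) =
      (mat (q * (stMap ε w)⁻¹), y') ∧ stMap L.f y' = q * (stMap ε w)⁻¹ * w * q⁻¹ * stMap L.f y ∧ stMap p y' = stMap p y) ?_ ?_ ?_ w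
  · intro q y; exact ⟨y, by simp⟩
  · intro i j hij c q y
    have e : mat q * (mat (xx i j (ε c)))⁻¹ = mat (q * (stMap ε (xx i j c))⁻¹) := by
      rw [stMap_xx, map_mul, map_inv]
    rw [Phi_xx L ε hε hij, Equiv.Perm.mul_apply, tau_apply, e, Q_apply]
    refine ⟨_, rfl, ?_, ?_⟩
    · rw [map_mul, naturality L hij, stMap_xx]
      have : xx i j (c - ε c) = xx i j c * (xx i j (ε c))⁻¹ := by rw [sub_eq_add_neg, xx_add, xx_neg]
      simp only [cj, MulAut.conj_apply, this]
      group
    · rw [map_mul, XX, stMap_X4' L p hp, one_mul]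
  · intro z1 z2 h1 h2 q y
    obtain ⟨y1, a1, b1, d1⟩ := h2 q y
    obtain ⟨y2, a2, b2, d2⟩ := h1 (q * (stMap ε z2)⁻¹) y1
    refine ⟨y2, ?_, ?_, d2.trans d1⟩
    · rw [map_mul, Equiv.Perm.mul_apply, a1, a2]
      simp [mul_assoc]
    · rw [b2, b1]
      simp [mul_assoc]

end nine
end SteinPf


namespace SteinPf
section ten
open Polynomial
variable (R : Type) [CommRing R] (a : R)

abbrev Ra := Localization.Away a

noncomputable def fmu : fiberRing R a →+* (Ra R a)[X] := (RingHom.snd _ _).comp (fiberRing R a).subtype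
noncomputable def fp : fiberRing R a →+* R := (RingHom.fst _ _).comp (fiberRing R a).subtype

theorem fib_ext {x y : fiberRing R a} (h1 : fp R a x = fp R a y) (h2 : fmu R a x = fmu R a y) : x = y :=
  Subtype.ext (Prod.ext h1 h2)

theorem fib_cond (x : fiberRing R a) : eval 0 (fmu R a x) = algebraMap R (Ra R a) (fp R a x) := x.2

noncomputable def iota : R →+* fiberRing R a where
  toFun r := ⟨(r, C (algebraMap R (Ra R a) r)), by simp [fiberRing]⟩
  map_one' := by ext1; simp
  map_zero' := by ext1; simp
  map_add' x y := by ext1; simp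
  map_mul' x y := by ext1; simp

noncomputable def eps : (Ra R a)[X] →+* (Ra R a)[X] := (C : Ra R a →+* (Ra R a)[X]).comp (evalRingHom 0)

noncomputable def sig : RingHom.ker (evalRingHom (0 : Ra R a)) →+ fiberRing R a where
  toFun s := ⟨(0, s.1), by
    have h : Polynomial.eval 0 s.1 = 0 := RingHom.mem_ker.1 s.2
    change Polynomial.eval 0 s.1 = algebraMap R (Localization.Away a) 0
    rw [h, map_zero]⟩
  map_zero' := rfl
  map_add' x y := by ext1; simp

theorem eps_mem (c : (Ra R a)[X]) : c - eps R a c ∈ RingHom.ker (evalRingHom (0 : Ra R a)) := by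
  simp [RingHom.mem_ker, eps]

theorem fmu_iota (r : R) : fmu R a (iota R a r) = C (algebraMap R (Ra R a) r) := rfl
theorem fp_iota (r : R) : fp R a (iota R a r) = r := rfl

theorem map_pow_unit (m : ℕ) : ∃ c, fmu R a (iota R a (a ^ m)) * c = 1 := by
  refine ⟨C (IsLocalization.mk' (Ra R a) 1 (⟨a ^ m, pow_mem (Submonoid.mem_powers a) m⟩ : Submonoid.powers a)), ?_⟩
  rw [fmu_iota, ← C_mul, IsLocalization.mul_mk'_eq_mk'_of_mul, mul_one]
  rw [IsLocalization.mk'_self, C_1]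

theorem lift_pow (c : (Ra R a)[X]) : ∃ m : ℕ, ∃ α, fmu R a α = fmu R a (iota R a (a ^ m)) * c := by
  obtain ⟨⟨r, ⟨_, m, rfl⟩⟩, hr⟩ := IsLocalization.surj (Submonoid.powers a) (eval 0 c)
  refine ⟨m, ⟨(r, fmu R a (iota R a (a ^ m)) * c), ?_⟩, rfl⟩
  change eval 0 (fmu R a (iota R a (a ^ m)) * c) = algebraMap R (Ra R a) r
  rw [← hr, fmu_iota, eval_mul, eval_C, mul_comm]

theorem tor_pow (α β : fiberRing R a) (h : fmu R a α = fmu R a β) :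
    ∃ m : ℕ, iota R a (a ^ m) * α = iota R a (a ^ m) * β := by
  have h' : algebraMap R (Ra R a) (fp R a α) = algebraMap R (Ra R a) (fp R a β) := by
    rw [← fib_cond, ← fib_cond, h]
  obtain ⟨⟨_, m, rfl⟩, hm⟩ := (IsLocalization.eq_iff_exists (Submonoid.powers a) _).1 h'
  refine ⟨m, fib_ext R a ?_ ?_⟩
  · rw [map_mul, map_mul, fp_iota]; exact hm
  · rw [map_mul, map_mul, h]

noncomputable def theL : Loc (fiberRing R a) (Ra R a)[X] where
  f := fmu R a
  S := (Submonoid.powers a).map (iota R a)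
  J := RingHom.ker (evalRingHom 0)
  σ := sig R a
  hu := by
    rintro _ ⟨_, ⟨m, rfl⟩, rfl⟩
    exact map_pow_unit R a m
  hl := by
    intro c
    obtain ⟨m, α, h⟩ := lift_pow R a c
    exact ⟨_, ⟨_, ⟨m, rfl⟩, rfl⟩, α, h⟩
  ht := by
    intro α β h
    obtain ⟨m, h⟩ := tor_pow R a α β h
    exact ⟨_, ⟨_, ⟨m, rfl⟩, rfl⟩, h⟩
  h1 := fun s => rfl
  h2 := by
    intro α s
    refine fib_ext R a ?_ ?_
    · change (0 : R) = fp R a α * 0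
      rw [mul_zero]
    · rfl

end ten

section eleven
variable {n : ℕ} {A B D : Type} [CommRing A] [CommRing B] [CommRing D]

theorem stMap_comp (g : B →+* D) (f : A →+* B) (z : SteinbergGroup n A) :
    stMap (g.comp f) z = stMap g (stMap f z) := by
  have : stMap (n := n) (g.comp f) = (stMap g).comp (stMap f) := by
    apply st_hom_ext
    intro i j hij r
    simp only [MonoidHom.comp_apply, ← xx_eq hij, stMap_xx, RingHom.comp_apply]
  rw [this]; rfl

theorem eq_stMap (f : A →+* B) (F : SteinbergGroup n A →* SteinbergGroup n B)
    (h : ∀ i j hij r, F (stx n A i j hij r) = stx n B i j hij (f r)) : F = stMap f := by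
  apply st_hom_ext
  intro i j hij r
  rw [h, ← xx_eq hij, ← xx_eq hij, stMap_xx]

end eleven
theorem main18 (n : ℕ) (hn : 4 ≤ n) (R : Type) [CommRing R]
    (a : R) (ha : ¬ IsNilpotent a)
    (pSt : SteinbergGroup n (fiberRing R a) →* SteinbergGroup n R)
    (hp : ∀ (i j : Fin n) (hij : i ≠ j) (x : fiberRing R a),
      pSt (stx n (fiberRing R a) i j hij x) = stx n R i j hij x.val.1)
    (μSt : SteinbergGroup n (fiberRing R a) →*
      SteinbergGroup n (Polynomial (Localization.Away a)))
    (hμ : ∀ (i j : Fin n) (hij : i ≠ j) (x : fiberRing R a),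
      μSt (stx n (fiberRing R a) i j hij x) =
        stx n (Polynomial (Localization.Away a)) i j hij x.val.2)
    (ev0 : SteinbergGroup n (Polynomial (Localization.Away a)) →*
      SteinbergGroup n (Localization.Away a))
    (hev0 : ∀ (i j : Fin n) (hij : i ≠ j) (p : Polynomial (Localization.Away a)),
      ev0 (stx n (Polynomial (Localization.Away a)) i j hij p) =
        stx n (Localization.Away a) i j hij (Polynomial.eval 0 p))
    (ρ : pSt.ker →* ev0.ker)
    (hρ : ∀ g : pSt.ker,
      (ρ g : SteinbergGroup n (Polynomial (Localization.Away a))) =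
        μSt (g : SteinbergGroup n (fiberRing R a))) :
    Function.Bijective ρ := by
  have : Fact (4 ≤ n) := ⟨hn⟩
  have e1 : pSt = stMap (fp R a) := eq_stMap (fp R a) pSt hp
  have e2 : μSt = stMap (fmu R a) := eq_stMap (fmu R a) μSt hμ
  have e3 : ev0 = stMap (Polynomial.evalRingHom (0 : Localization.Away a)) :=
    eq_stMap (Polynomial.evalRingHom (0 : Localization.Away a)) ev0 hev0
  have hinj : ∀ z : SteinbergGroup n (fiberRing R a), pSt z = 1 →
      (Phi (theL R a) (eps R a) (eps_mem R a) (μSt z) (1, 1)) = (1, z) := by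
    intro z hz
    rw [e1] at hz
    have := Phi_inj (theL R a) (eps R a) (eps_mem R a) ((iota R a).comp (fp R a))
      (by
        intro α
        change fmu R a (iota R a (fp R a α)) = eps R a (fmu R a α)
        rw [fmu_iota, ← fib_cond]; rfl)
      (by
        intro α
        refine fib_ext R a ?_ ?_
        · change (0 : R) = fp R a α - fp R a α
          rw [sub_self]
        · change fmu R a α - eps R a (fmu R a α) = fmu R a α - fmu R a (iota R a (fp R a α))
          rw [fmu_iota, ← fib_cond]; rfl) z 1 1
    rw [stMap_comp, hz] at this
    simp only [map_one, inv_one, mul_one, one_mul] at this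
    rw [e2]
    exact this
  constructor
  · intro g g' hg
    have h := congrArg Subtype.val hg
    rw [hρ, hρ] at h
    have h1 := hinj g g.2
    have h2 := hinj g' g'.2
    rw [h, h2] at h1
    exact Subtype.ext (congrArg Prod.snd h1).symm
  · intro w
    have hw : stMap (Polynomial.evalRingHom (0 : Localization.Away a)) w.1 = 1 := by
      rw [← e3]; exact w.2
    obtain ⟨y, -, hy1, hy2⟩ := Phi_surj (theL R a) (eps R a) (eps_mem R a) (fp R a) (fun s => rfl) w.1 1 1
    have he : stMap (eps R a) w.1 = 1 := by
      rw [eps, stMap_comp, hw, map_one]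
    rw [he] at hy1
    simp only [map_one, inv_one, mul_one, one_mul] at hy1 hy2
    refine ⟨⟨y, ?_⟩, Subtype.ext ?_⟩
    · rw [MonoidHom.mem_ker, e1]; exact hy2
    · rw [hρ, e2]; exact hy1

end SteinPf

theorem stmt18 (n : ℕ) (hn : 4 ≤ n) (R : Type) [CommRing R]
    (a : R) (ha : ¬ IsNilpotent a)
    (pSt : SteinbergGroup n (fiberRing R a) →* SteinbergGroup n R)
    (hp : ∀ (i j : Fin n) (hij : i ≠ j) (x : fiberRing R a),
      pSt (stx n (fiberRing R a) i j hij x) = stx n R i j hij x.val.1)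
    (μSt : SteinbergGroup n (fiberRing R a) →*
      SteinbergGroup n (Polynomial (Localization.Away a)))
    (hμ : ∀ (i j : Fin n) (hij : i ≠ j) (x : fiberRing R a),
      μSt (stx n (fiberRing R a) i j hij x) =
        stx n (Polynomial (Localization.Away a)) i j hij x.val.2)
    (ev0 : SteinbergGroup n (Polynomial (Localization.Away a)) →*
      SteinbergGroup n (Localization.Away a))
    (hev0 : ∀ (i j : Fin n) (hij : i ≠ j) (p : Polynomial (Localization.Away a)),
      ev0 (stx n (Polynomial (Localization.Away a)) i j hij p) =
        stx n (Localization.Away a) i j hij (Polynomial.eval 0 p))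
    (ρ : pSt.ker →* ev0.ker)
    (hρ : ∀ g : pSt.ker,
      (ρ g : SteinbergGroup n (Polynomial (Localization.Away a))) =
        μSt (g : SteinbergGroup n (fiberRing R a))) :
    Function.Bijective ρ := by
  exact SteinPf.main18 n hn R a ha pSt hp μSt hμ ev0 hev0 ρ hρ
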